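/- Let V be a primitive linear subspace of the n×p matrices over F2 with upper rank 2. Then n = p = 3 and exactly one of the following four conditions holds: (i) V is equivalent to a linear subspace of J3(F2); (ii) V is equivalent to Mata3(F2); (iii) V is equivalent to U3(F2); (iv) V is equivalent to V3(F2). -/

import Mathlib

open Matrix

/-- Two linear subspaces of `n × p` matrices over `K` are *equivalent* when one is obtained
from the other by multiplying on the left and on the right by fixed invertible matrices. -/
def MatEquiv (K : Type*) [Field K] {n p : ℕ}
    (V₁ V₂ : Submodule K (Matrix (Fin n) (Fin p) K)) : Prop :=
  ∃ (P : Matrix (Fin n) (Fin n) K) (Q : Matrix (Fin p) (Fin p) K),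
    IsUnit P ∧ IsUnit Q ∧
      (V₂ : Set (Matrix (Fin n) (Fin p) K)) =
        (fun M => P * M * Q) '' (V₁ : Set (Matrix (Fin n) (Fin p) K))

/-- A linear subspace of matrices is *reduced* when no nonzero vector is annihilated by every
matrix of the space, and the column spaces of the matrices of the space together span the
whole target space. -/
def Reduced (K : Type*) [Field K] {n p : ℕ}
    (V : Submodule K (Matrix (Fin n) (Fin p) K)) : Prop :=
  (∀ x : Fin p → K, (∀ M ∈ V, M.mulVec x = 0) → x = 0) ∧
  Submodule.span K {y : Fin n → K | ∃ M ∈ V, ∃ x : Fin p → K, M.mulVec x = y} = ⊤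

/-- The *upper rank* of a linear subspace of matrices: the maximal rank of a matrix in it. -/
noncomputable def urk {K : Type*} [Field K] {n p : ℕ}
    (V : Submodule K (Matrix (Fin n) (Fin p) K)) : ℕ :=
  sSup (Matrix.rank '' (V : Set (Matrix (Fin n) (Fin p) K)))

/-- The matrix obtained by deleting the last column. -/
def dropCol {K : Type*} [Field K] {n p : ℕ} (M : Matrix (Fin n) (Fin p) K) :
    Matrix (Fin n) (Fin (p - 1)) K :=
  M.submatrix id (Fin.castLE (Nat.sub_le p 1))

/-- The matrix obtained by deleting the last row. -/
def dropRow {K : Type*} [Field K] {n p : ℕ} (M : Matrix (Fin n) (Fin p) K) :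
    Matrix (Fin (n - 1)) (Fin p) K :=
  M.submatrix (Fin.castLE (Nat.sub_le n 1)) id

/-- A linear subspace of matrices (of upper rank `r = urk V`) is *semi-primitive* when it is
reduced and it is not equivalent to a subspace `T` such that the space obtained by deleting
the last column of each matrix of `T` has upper rank at most `r - 1`. -/
def SemiPrimitive (K : Type*) [Field K] {n p : ℕ}
    (V : Submodule K (Matrix (Fin n) (Fin p) K)) : Prop :=
  Reduced K V ∧
    ¬ ∃ T : Submodule K (Matrix (Fin n) (Fin p) K),
        MatEquiv K V T ∧ ∀ M ∈ T, (dropCol M).rank ≤ urk V - 1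

/-- A linear subspace of matrices (of upper rank `r = urk V`) is *primitive* when it is
semi-primitive and it is not equivalent to a subspace `T` such that the space obtained by
deleting the last row of each matrix of `T` has upper rank at most `r - 1`. -/
def Primitive (K : Type*) [Field K] {n p : ℕ}
    (V : Submodule K (Matrix (Fin n) (Fin p) K)) : Prop :=
  SemiPrimitive K V ∧
    ¬ ∃ T : Submodule K (Matrix (Fin n) (Fin p) K),
        MatEquiv K V T ∧ ∀ M ∈ T, (dropRow M).rank ≤ urk V - 1

/-- `J3(F2)`: the space of upper-triangular `3 × 3` matrices over `F2` with trace zero. -/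
def J3 : Submodule (ZMod 2) (Matrix (Fin 3) (Fin 3) (ZMod 2)) where
  carrier := {M | M.trace = 0 ∧ ∀ i j : Fin 3, j < i → M i j = 0}
  add_mem' := by
    rintro M N ⟨hM1, hM2⟩ ⟨hN1, hN2⟩
    refine ⟨by simp [Matrix.trace_add, hM1, hN1], ?_⟩
    intro i j h
    simp [Matrix.add_apply, hM2 i j h, hN2 i j h]
  zero_mem' := by
    refine ⟨by simp, ?_⟩
    intro i j h
    simp
  smul_mem' := by
    rintro c M ⟨hM1, hM2⟩
    refine ⟨by simp [Matrix.trace_smul, hM1], ?_⟩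
    intro i j h
    simp [Matrix.smul_apply, hM2 i j h]

/-- `Mata3(F2)`: the space of alternating (skew-symmetric with zero diagonal) `3 × 3`
matrices over `F2`. -/
def Mata3 : Submodule (ZMod 2) (Matrix (Fin 3) (Fin 3) (ZMod 2)) where
  carrier := {M | Mᵀ = -M ∧ ∀ i : Fin 3, M i i = 0}
  add_mem' := by
    rintro M N ⟨hM1, hM2⟩ ⟨hN1, hN2⟩
    refine ⟨by rw [Matrix.transpose_add, hM1, hN1]; abel, fun i => by
      simp [Matrix.add_apply, hM2 i, hN2 i]⟩
  zero_mem' := ⟨by simp, fun i => rfl⟩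
  smul_mem' := by
    rintro c M ⟨hM1, hM2⟩
    exact ⟨by rw [Matrix.transpose_smul, hM1, smul_neg], fun i => by
      simp [Matrix.smul_apply, hM2 i]⟩

/-- `U3(F2)`: the matrices `!![0, a, a+c; a, 0, b; a+b, c, 0]` with `a, b, c ∈ F2`. -/
def U3 : Submodule (ZMod 2) (Matrix (Fin 3) (Fin 3) (ZMod 2)) where
  carrier := {M | ∃ a b c : ZMod 2, M = !![0, a, a + c; a, 0, b; a + b, c, 0]}
  add_mem' := by
    rintro M N ⟨a, b, c, rfl⟩ ⟨a', b', c', rfl⟩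
    exact ⟨a + a', b + b', c + c', by revert a b c a' b' c'; decide⟩
  zero_mem' := ⟨0, 0, 0, by decide⟩
  smul_mem' := by
    rintro k M ⟨a, b, c, rfl⟩
    exact ⟨k * a, k * b, k * c, by revert k a b c; decide⟩

/-- `V3(F2)`: the `3 × 3` matrices over `F2` with zero diagonal satisfying
`M 0 1 + M 1 2 + M 2 0 = 0` and `M 2 1 + M 1 0 + M 0 2 = 0`. -/
def V3 : Submodule (ZMod 2) (Matrix (Fin 3) (Fin 3) (ZMod 2)) where
  carrier := {M | (∀ i : Fin 3, M i i = 0) ∧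
    M 0 1 + M 1 2 + M 2 0 = 0 ∧ M 2 1 + M 1 0 + M 0 2 = 0}
  add_mem' := by
    rintro M N ⟨hM1, hM2, hM3⟩ ⟨hN1, hN2, hN3⟩
    refine ⟨fun i => by simp [Matrix.add_apply, hM1 i, hN1 i], ?_, ?_⟩
    · simp only [Matrix.add_apply]
      linear_combination hM2 + hN2
    · simp only [Matrix.add_apply]
      linear_combination hM3 + hN3
  zero_mem' := by
    refine ⟨fun i => rfl, ?_, ?_⟩ <;> simp
  smul_mem' := by
    rintro c M ⟨hM1, hM2, hM3⟩
    refine ⟨fun i => by simp [Matrix.smul_apply, hM1 i], ?_, ?_⟩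
    · simp only [Matrix.smul_apply, smul_eq_mul]
      linear_combination c * hM2
    · simp only [Matrix.smul_apply, smul_eq_mul]
      linear_combination c * hM3

/-- Transport of a subspace of `n × p` matrices to a subspace of `3 × 3` matrices along
equalities `n = 3` and `p = 3`. -/
def reindexSub {n p : ℕ} (hn : n = 3) (hp : p = 3)
    (V : Submodule (ZMod 2) (Matrix (Fin n) (Fin p) (ZMod 2))) :
    Submodule (ZMod 2) (Matrix (Fin 3) (Fin 3) (ZMod 2)) :=
  V.map (Matrix.reindexLinearEquiv (ZMod 2) (ZMod 2) (finCongr hn) (finCongr hp)).toLinearMap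

/-- Exactly one of four conditions holds. -/
def ExactlyOne4 (c₁ c₂ c₃ c₄ : Prop) : Prop :=
  (c₁ ∧ ¬c₂ ∧ ¬c₃ ∧ ¬c₄) ∨ (¬c₁ ∧ c₂ ∧ ¬c₃ ∧ ¬c₄) ∨
  (¬c₁ ∧ ¬c₂ ∧ c₃ ∧ ¬c₄) ∨ (¬c₁ ∧ ¬c₂ ∧ ¬c₃ ∧ c₄)

/-!
Over `ZMod 2` a line is a pair `{0, w}`. A primitive space of upper rank two enters through four
properties (`RankTwoCore`): its elements have rank at most two, no nonzero vector is annihilated by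
all of them, their images span the target, and no hyperplane of the source is mapped by all of them
into a common line. A nonzero vector `x` is *thin* if all values at `x` lie in a common line
`{0, w}`.

**Dimensions.** Both dimensions are at least three, as deleting one of at most two columns or rows
leaves matrices of rank at most one. In a source of dimension at least four, no vector is thin
(`RankTwoCore.not_hasThinVector`). When the target has dimension three, double counting the pairs
`(m, x)` with `m x = 0` turns into a count of the pairs of a functional `f` and a vector `x` such
that `f` kills all values at `x`. As no vector is thin, for `f ≠ 0` these `x` lie on a line, which
bounds the source by dimension three. Larger targets are reduced to this case by passing to
quotients by lines (`RankTwoCore.finrank_le_three`), and transposition bounds the target.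

**A thin vector exists.** Modulo the line `{0, w}` and the thin vector `x`, one has `2 × 2`
matrices, which are singular whenever the value at `x` is `w`. The product of three nonzero
functionals over `ZMod 2` vanishes only if their sum does, and this triangularizes these matrices
simultaneously (`exists_common_eigenvector`): the space is equivalent to a subspace of `J3`.

**No thin vector exists.** The relation that `f (m x) = 0` for all `m` is then a partial matching
between nonzero functionals and nonzero vectors (`RankTwoCore.biUnique_matched`), and the
double counting provides two matched pairs. Using them as basis vectors gives two zero diagonal
entries, and the third one can be cleared (`RankTwoCore.exists_linearIndependent_matched`). The
determinant of `!![0, a, b; c, 0, d; e, f, 0]` is `ade + bcf`, and its identical vanishing leaves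
only `Mata3`, `U3` and `V3` (`matEquiv_of_diag_eq_zero`).

**Exclusivity.** Having a thin vector is invariant under equivalence; subspaces of `J3` have one and
the other three spaces have none. `V3` has sixteen elements, `Mata3` and `U3` have eight. Up to a
congruence, an equivalence from `U3` to `Mata3` would give an invertible matrix whose products with
the elements of `U3` are all alternating, but only the zero matrix has this property.
-/

open Module Submodule LinearMap

/-! ### Linear algebra -/

section LinearAlgebra

variable {K X U W : Type*} [Field K] [AddCommGroup X] [Module K X] [AddCommGroup U] [Module K U]
  [AddCommGroup W] [Module K W]

theorem mem_span_singleton_symm {x y : W} (hx : x ≠ 0) (h : x ∈ K ∙ y) : y ∈ K ∙ x := by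
  obtain ⟨a, rfl⟩ := mem_span_singleton.1 h
  exact mem_span_singleton.2 ⟨a⁻¹, inv_smul_smul₀ (left_ne_zero_of_smul hx) y⟩

theorem linearIndependent_pair_iff_notMem_span {x y : W} (hx : x ≠ 0) :
    LinearIndependent K ![x, y] ↔ y ∉ K ∙ x := by
  simp only [LinearIndependent.pair_iff' hx, mem_span_singleton, not_exists, ne_eq]

theorem not_linearIndependent_pair_of_mem_span {x y w : W} (hx : x ∈ K ∙ w) (hy : y ∈ K ∙ w) :
    ¬ LinearIndependent K ![x, y] := fun h ↦
  have hx₀ : x ≠ 0 := h.ne_zero 0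
  (linearIndependent_pair_iff_notMem_span hx₀).1 h
    (mem_span_singleton_trans hy (mem_span_singleton_symm hx₀ hx))

theorem exists_range_le_span_singleton_of_not_linearIndependent {F : U →ₗ[K] W}
    (h : ∀ u v, ¬ LinearIndependent K ![F u, F v]) : ∃ w, range F ≤ K ∙ w := by
  by_cases hF : ∀ u, F u = 0
  · exact ⟨0, by rintro _ ⟨u, rfl⟩; simp [hF u]⟩
  push Not at hF
  obtain ⟨u, hu⟩ := hF
  refine ⟨F u, ?_⟩
  rintro _ ⟨v, rfl⟩
  by_contra hv
  exact h u v ((linearIndependent_pair_iff_notMem_span hu).2 hv)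

theorem eq_and_eq_of_smul_add_smul_eq {s t : W} (h : LinearIndependent K ![s, t]) {a b c d : K}
    (heq : a • s + b • t = c • s + d • t) : a = c ∧ b = d := by
  have := LinearIndependent.pair_iff.1 h (a - c) (b - d) (by
    rw [sub_smul, sub_smul, sub_add_sub_comm, heq, sub_self])
  simpa only [sub_eq_zero] using this

theorem exists_linearMap_apply_eq_single {ι : Type*} [Finite ι] [DecidableEq ι] {v : ι → W}
    (hv : LinearIndependent K v) :
    ∃ g : W →ₗ[K] (ι → K), ∀ i, g (v i) = Pi.single i 1 := by
  have := Fintype.ofFinite ι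
  obtain ⟨g, hg⟩ := exists_leftInverse_of_injective (Fintype.linearCombination K v)
    (ker_eq_bot.2 hv.fintypeLinearCombination_injective)
  exact ⟨g, fun i ↦ by simpa using LinearMap.congr_fun hg (Pi.single i 1)⟩

theorem surjective_pi_of_linearIndependent {ι : Type*} [Finite ι] {f : ι → Dual K X}
    (hf : LinearIndependent K f) : Function.Surjective (LinearMap.pi f) := by
  classical
  have := Fintype.ofFinite ι
  rw [← dualMap_injective_iff, injective_iff_map_eq_zero]
  intro φ hφ
  have hcomb : ∑ i, φ (fun j ↦ if i = j then 1 else 0) • f i = 0 := by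
    ext x
    have := LinearMap.congr_fun hφ x
    rw [dualMap_apply, φ.pi_apply_eq_sum_univ] at this
    simpa [mul_comm] using this
  refine LinearMap.ext fun a ↦ ?_
  rw [φ.pi_apply_eq_sum_univ]
  simp [Fintype.linearIndependent_iff.1 hf _ hcomb]

theorem range_eq_span_pair [FiniteDimensional K W] {F : U →ₗ[K] W} (hF : finrank K (range F) ≤ 2)
    {u v : U} (h : LinearIndependent K ![F u, F v]) : range F = span K {F u, F v} := by
  refine (eq_of_le_of_finrank_le (span_le.2 ?_) ?_).symm
  · simp [Set.insert_subset_iff]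
  · have := finrank_span_eq_card h
    rw [Matrix.range_cons_cons_empty] at this
    simpa [this] using hF

theorem exists_range_mkQ_comp_le_span_singleton [FiniteDimensional K W] {F : U →ₗ[K] W}
    (hF : finrank K (range F) ≤ 2) {u : U} (hu : F u ≠ 0) :
    ∃ c, range ((K ∙ F u).mkQ ∘ₗ F) ≤ K ∙ c := by
  by_cases hle : range F ≤ K ∙ F u
  · refine ⟨0, ?_⟩
    rintro _ ⟨v, rfl⟩
    simpa using hle ⟨v, rfl⟩
  obtain ⟨_, ⟨v, rfl⟩, hv⟩ := SetLike.not_le_iff_exists.1 hle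
  refine ⟨(K ∙ F u).mkQ (F v), ?_⟩
  rw [range_comp, range_eq_span_pair hF ((linearIndependent_pair_iff_notMem_span hu).2 hv),
    Submodule.map_span, Set.image_pair, mkQ_apply _ (F u),
    (Submodule.Quotient.mk_eq_zero _).2 (mem_span_singleton_self _), span_insert_zero]

theorem ker_le_ker_of_range_add_le_span_singleton {F G : U →ₗ[K] W} {b c : W} {u : U}
    (hG : range G ≤ K ∙ b) (hu : F u ∉ K ∙ b) (hFG : range (F + G) ≤ K ∙ c) :
    ker F ≤ ker G := by
  intro z hz
  by_contra hGz
  have hzc : G z ∈ K ∙ c := by simpa [mem_ker.1 hz] using hFG ⟨z, rfl⟩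
  have hcb : c ∈ K ∙ b :=
    mem_span_singleton_trans (mem_span_singleton_symm hGz hzc) (hG ⟨z, rfl⟩)
  have huc : F u + G u ∈ K ∙ b := mem_span_singleton_trans (hFG ⟨u, rfl⟩) hcb
  exact hu (by simpa using sub_mem huc (hG ⟨u, rfl⟩))

theorem exists_dual_smul_eq {F : X →ₗ[K] W} {w : W} (hF : range F ≤ K ∙ w) :
    ∃ a : Dual K X, ∀ x, F x = a x • w := by
  by_cases hw : w = 0
  · exact ⟨0, fun x ↦ by simpa [hw] using hF ⟨x, rfl⟩⟩
  obtain ⟨g, hg⟩ := Projective.exists_dual_eq_one K hw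
  refine ⟨g ∘ₗ F, fun x ↦ ?_⟩
  obtain ⟨k, hk⟩ := mem_span_singleton.1 (hF ⟨x, rfl⟩)
  simp [← hk, hg]

theorem exists_range_le_span_or_exists_ker_le_ker (e : X →ₗ[K] U →ₗ[K] W)
    (h : ∀ m, ∃ w, range (e m) ≤ K ∙ w) :
    (∃ w, ∀ m, range (e m) ≤ K ∙ w) ∨ ∃ φ : Dual K U, ∀ m, ker φ ≤ ker (e m) := by
  by_cases h₀ : ∀ m, e m = 0
  · exact .inl ⟨0, fun m ↦ by simp [h₀ m]⟩
  push Not at h₀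
  obtain ⟨m₀, hm₀⟩ := h₀
  obtain ⟨u₀, hu₀⟩ := DFunLike.ne_iff.1 hm₀
  obtain ⟨a, ha⟩ := h m₀
  by_cases h₁ : ∀ m, range (e m) ≤ K ∙ a
  · exact .inl ⟨a, h₁⟩
  push Not at h₁
  obtain ⟨m₁, hm₁⟩ := h₁
  obtain ⟨_, ⟨u₁, rfl⟩, hu₁⟩ := SetLike.not_le_iff_exists.1 hm₁
  have key : ∀ {m m' u c}, range (e m') ≤ K ∙ c → e m u ∉ K ∙ c → ker (e m) ≤ ker (e m') := by
    intro m m' u c hc hu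
    obtain ⟨d, hd⟩ := h (m + m')
    exact ker_le_ker_of_range_add_le_span_singleton hc hu (by rwa [map_add] at hd)
  have himp : ∀ {c}, e m₀ u₀ ∈ K ∙ c → e m₁ u₁ ∉ K ∙ c := fun {c} h₀ h₁ ↦
    hu₁ (mem_span_singleton_trans h₁ (mem_span_singleton_trans
      (mem_span_singleton_symm hu₀ h₀) (ha ⟨u₀, rfl⟩)))
  have hker : ker (e m₀) ≤ ker (e m₁) := by
    obtain ⟨b, hb⟩ := h m₁
    exact key hb fun h ↦ himp h (hb ⟨u₁, rfl⟩)
  obtain ⟨φ, hφ⟩ := exists_dual_smul_eq ha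
  have hφ₀ : ker φ ≤ ker (e m₀) := fun u hu ↦ by rw [mem_ker, hφ, mem_ker.1 hu, zero_smul]
  refine .inr ⟨φ, fun m ↦ hφ₀.trans ?_⟩
  obtain ⟨c, hc⟩ := h m
  by_cases hu : e m₀ u₀ ∈ K ∙ c
  · exact hker.trans (key hc (himp hu))
  · exact key hc hu

end LinearAlgebra

/-! ### Functionals over the field with two elements -/

section BinaryFunctionals

theorem eq_zero_or_eq_zero_of_dual_mul_eq_zero {R X : Type*} [CommRing R] [IsDomain R]
    [AddCommGroup X] [Module R X] {a b : Dual R X} (h : ∀ x, a x * b x = 0) : a = 0 ∨ b = 0 := by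
  by_contra! hab
  obtain ⟨x, hx⟩ := DFunLike.ne_iff.1 hab.1
  obtain ⟨y, hy⟩ := DFunLike.ne_iff.1 hab.2
  have hbx : b x = 0 := (mul_eq_zero.1 (h x)).resolve_left hx
  have hay : a y = 0 := (mul_eq_zero.1 (h y)).resolve_right hy
  have hxy : a x * b y = 0 := by simpa [hbx, hay] using h (x + y)
  exact (mul_eq_zero.1 hxy).elim hx hy

theorem linearMap_ext_of_dual_eq_one {R X W : Type*} [CommRing R] [AddCommGroup X] [Module R X]
    [AddCommGroup W] [Module R W] {a : Dual R X} {x₀ : X} (hx₀ : a x₀ = 1) {F G : X →ₗ[R] W}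
    (h : ∀ x, a x = 1 → F x = G x) : F = G := by
  ext x
  have := h (x + (1 - a x) • x₀) (by simp [hx₀])
  simpa [h x₀ hx₀] using this

variable {X W : Type*} [AddCommGroup X] [Module (ZMod 2) X] [AddCommGroup W] [Module (ZMod 2) W]

theorem zmod_two_eq_zero_or_one : ∀ a : ZMod 2, a = 0 ∨ a = 1 := by decide

theorem zmod_two_eq_one_of_ne_zero : ∀ {a : ZMod 2}, a ≠ 0 → a = 1 := by decide

theorem zmod_two_add_eq_zero_iff {x y : W} : x + y = 0 ↔ x = y := by
  rw [add_eq_zero_iff_eq_neg, ZModModule.neg_eq_self]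

theorem linearIndependent_pair_zmod_two_iff {x y : W} :
    LinearIndependent (ZMod 2) ![x, y] ↔ x ≠ 0 ∧ y ≠ 0 ∧ x ≠ y := by
  rcases eq_or_ne x 0 with rfl | hx
  · exact iff_of_false (fun h ↦ h.ne_zero 0 rfl) fun h ↦ h.1 rfl
  · have forall_zmod_two (p : ZMod 2 → Prop) : (∀ a, p a) ↔ p 0 ∧ p 1 := Fin.forall_fin_two
    simp [LinearIndependent.pair_iff' hx, forall_zmod_two, hx, eq_comm]

theorem not_linearIndependent_pair_zmod_two_iff {x y : W} :
    ¬ LinearIndependent (ZMod 2) ![x, y] ↔ x = 0 ∨ y = 0 ∨ x = y := by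
  rw [linearIndependent_pair_zmod_two_iff]
  tauto

theorem linearIndependent_triple_zmod_two {x y z : W} (hx : x ≠ 0) (hy : y ≠ 0) (hz : z ≠ 0)
    (hxy : x ≠ y) (hxz : x ≠ z) (hyz : y ≠ z) (hsum : x + y + z ≠ 0) :
    LinearIndependent (ZMod 2) ![x, y, z] := by
  rw [Fintype.linearIndependent_iff]
  intro g hg
  rw [Fin.sum_univ_three] at hg
  rw [Fin.forall_fin_succ, Fin.forall_fin_two]
  rcases zmod_two_eq_zero_or_one (g 0) with h₀ | h₀ <;>
    rcases zmod_two_eq_zero_or_one (g 1) with h₁ | h₁ <;>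
      rcases zmod_two_eq_zero_or_one (g 2) with h₂ | h₂ <;>
        simp_all [zmod_two_add_eq_zero_iff]

theorem exists_dual_eq_one_eq_zero {a b : Dual (ZMod 2) X} (ha : a ≠ 0) (hab : a ≠ b) :
    ∃ x, a x = 1 ∧ b x = 0 := by
  by_contra! h
  have hmul : ∀ x, a x * (a + b) x = 0 := fun x ↦ by
    have : ∀ p q : ZMod 2, (p = 1 → q ≠ 0) → p * (p + q) = 0 := by decide
    exact this _ _ (h x)
  exact (eq_zero_or_eq_zero_of_dual_mul_eq_zero hmul).elim ha
    fun h ↦ hab (zmod_two_add_eq_zero_iff.1 h)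

theorem add_add_eq_zero_of_dual_mul_mul_eq_zero {a b c : Dual (ZMod 2) X} (ha : a ≠ 0) (hb : b ≠ 0)
    (hc : c ≠ 0) (h : ∀ x, a x * b x * c x = 0) : a + b + c = 0 := by
  have mul_self : ∀ p q : ZMod 2, p * p * q = p * q := by decide
  have not_mul {f g : Dual (ZMod 2) X} (hf : f ≠ 0) (hg : g ≠ 0) : ¬ ∀ x, f x * g x = 0 :=
    fun hfg ↦ (eq_zero_or_eq_zero_of_dual_mul_eq_zero hfg).elim hf hg
  have hab : a ≠ b := by
    rintro rfl
    exact not_mul ha hc fun x ↦ by rw [← mul_self, h]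
  have hac : a ≠ c := by
    rintro rfl
    exact not_mul ha hb fun x ↦ by rw [← mul_self, mul_right_comm, h]
  have hbc : b ≠ c := by
    rintro rfl
    exact not_mul hb ha fun x ↦ by rw [← mul_self, ← h x]; ring
  by_contra hsum
  obtain ⟨x, hx⟩ := surjective_pi_of_linearIndependent
    (linearIndependent_triple_zmod_two ha hb hc hab hac hbc hsum) ![1, 1, 1]
  have hax : a x = 1 := congrFun hx 0
  have hbx : b x = 1 := congrFun hx 1
  have hcx : c x = 1 := congrFun hx 2
  simpa [hax, hbx, hcx] using h x

theorem exists_coordinates_of_singular {s t m n : W} (hst : LinearIndependent (ZMod 2) ![s, t])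
    (h : ¬ LinearIndependent (ZMod 2) ![m, n])
    (h' : ¬ LinearIndependent (ZMod 2) ![m + s, n + t]) :
    ∃ p q r k : ZMod 2, m = p • s + q • t ∧ n = r • s + k • t ∧ p + k = 1 ∧ q * r = 0 := by
  obtain ⟨hs, ht, hne⟩ := linearIndependent_pair_zmod_two_iff.1 hst
  simp only [not_linearIndependent_pair_zmod_two_iff, zmod_two_add_eq_zero_iff] at h h'
  rcases h with rfl | rfl | rfl <;> rcases h' with h' | h' | h'
  · exact absurd h'.symm hs
  · exact ⟨0, 0, 0, 1, by simp, by simp [h'], by decide, by decide⟩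
  · exact ⟨0, 0, 1, 1, by simp,
      by simpa [ZModModule.sub_eq_add] using eq_sub_of_add_eq h'.symm, by decide, by decide⟩
  · exact ⟨1, 0, 0, 0, by simp [h'], by simp, by decide, by decide⟩
  · exact absurd h'.symm ht
  · exact ⟨1, 1, 0, 0, by simpa [ZModModule.sub_eq_add, add_comm t] using eq_sub_of_add_eq h',
      by simp, by decide, by decide⟩
  · exact ⟨1, 0, 1, 0, by simp [h'], by simp [h'], by decide, by decide⟩
  · exact ⟨0, 1, 0, 1, by simp [h'], by simp [h'], by decide, by decide⟩
  · exact absurd (add_left_cancel h') hne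

theorem exists_pencil_coordinates {e₁ e₂ : X →ₗ[ZMod 2] W} {a : Dual (ZMod 2) X}
    (ha : ∀ m, a m = 1 → ¬ LinearIndependent (ZMod 2) ![e₁ m, e₂ m]) (ha₀ : a ≠ 0) {N : X}
    (hN : LinearIndependent (ZMod 2) ![e₁ N, e₂ N]) :
    ∃ P Q R S : Dual (ZMod 2) X, (∀ m, e₁ m = P m • e₁ N + Q m • e₂ N) ∧
      (∀ m, e₂ m = R m • e₁ N + S m • e₂ N) ∧ P + S = a ∧ ∀ m, a m * Q m * R m = 0 := by
  have haN : a N = 0 := by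
    by_contra h
    exact ha N (zmod_two_eq_one_of_ne_zero h) hN
  obtain ⟨M, hM⟩ : ∃ M, a M = 1 := by
    obtain ⟨M, hM⟩ := DFunLike.ne_iff.1 ha₀
    exact ⟨M, zmod_two_eq_one_of_ne_zero hM⟩
  obtain ⟨g, hg⟩ := exists_linearMap_apply_eq_single hN
  have hs : g (e₁ N) = Pi.single 0 1 := hg 0
  have ht : g (e₂ N) = Pi.single 1 1 := hg 1
  set P : Dual (ZMod 2) X := proj 0 ∘ₗ g ∘ₗ e₁
  set Q : Dual (ZMod 2) X := proj 1 ∘ₗ g ∘ₗ e₁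
  set R : Dual (ZMod 2) X := proj 0 ∘ₗ g ∘ₗ e₂
  set S : Dual (ZMod 2) X := proj 1 ∘ₗ g ∘ₗ e₂
  have key (m : X) (hm : a m = 1) : e₁ m = P m • e₁ N + Q m • e₂ N ∧
      e₂ m = R m • e₁ N + S m • e₂ N ∧ P m + S m = 1 ∧ Q m * R m = 0 := by
    obtain ⟨p, q, r, k, h₁, h₂, htr, hdet⟩ := exists_coordinates_of_singular hN (ha m hm)
      (by simpa using ha (m + N) (by simp [hm, haN]))
    have hPm : P m = p := by simp [P, h₁, hs, ht]
    have hQm : Q m = q := by simp [Q, h₁, hs, ht]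
    have hRm : R m = r := by simp [R, h₂, hs, ht]
    have hSm : S m = k := by simp [S, h₂, hs, ht]
    exact ⟨by rw [hPm, hQm, h₁], by rw [hRm, hSm, h₂],
      by rw [hPm, hSm, htr], by rw [hQm, hRm, hdet]⟩
  refine ⟨P, Q, R, S, LinearMap.congr_fun (g := P.smulRight (e₁ N) + Q.smulRight (e₂ N)) ?_,
    LinearMap.congr_fun (g := R.smulRight (e₁ N) + S.smulRight (e₂ N)) ?_, ?_, fun m ↦ ?_⟩
  · exact linearMap_ext_of_dual_eq_one hM fun m hm ↦ (key m hm).1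
  · exact linearMap_ext_of_dual_eq_one hM fun m hm ↦ (key m hm).2.1
  · exact linearMap_ext_of_dual_eq_one hM fun m hm ↦ (key m hm).2.2.1.trans hm.symm
  · rcases zmod_two_eq_zero_or_one (a m) with hm | hm
    · simp [hm]
    · simp [hm, -mul_eq_zero, (key m hm).2.2.2]

theorem exists_common_eigenvector {e₁ e₂ : X →ₗ[ZMod 2] W} {a : Dual (ZMod 2) X}
    (ha : ∀ m, a m = 1 → ¬ LinearIndependent (ZMod 2) ![e₁ m, e₂ m]) (ha₀ : a ≠ 0) {N : X}
    (hN : LinearIndependent (ZMod 2) ![e₁ N, e₂ N]) :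
    ∃ α β : ZMod 2, (α ≠ 0 ∨ β ≠ 0) ∧
      ∀ m, α • e₁ m + β • e₂ m ∈ ZMod 2 ∙ (α • e₁ N + β • e₂ N) := by
  obtain ⟨P, Q, R, S, h₁, h₂, rfl, hprod⟩ := exists_pencil_coordinates ha ha₀ hN
  by_cases hQ : Q = 0
  · exact ⟨1, 0, by simp, fun m ↦ mem_span_singleton.2 ⟨P m, by simp [h₁ m, hQ]⟩⟩
  by_cases hR : R = 0
  · exact ⟨0, 1, by simp, fun m ↦ mem_span_singleton.2 ⟨S m, by simp [h₂ m, hR]⟩⟩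
  refine ⟨1, 1, by simp, fun m ↦ mem_span_singleton.2 ⟨P m + R m, ?_⟩⟩
  have hsum : P m + S m + Q m + R m = 0 :=
    LinearMap.congr_fun (add_add_eq_zero_of_dual_mul_mul_eq_zero ha₀ hQ hR hprod) m
  have hQS : P m + R m = Q m + S m := by
    rw [← zmod_two_add_eq_zero_iff, ← hsum]
    ring
  rw [one_smul, one_smul, one_smul, one_smul, h₁ m, h₂ m, smul_add]
  nth_rw 2 [hQS]
  module

end BinaryFunctionals

/-! ### Operator spaces and thin vectors -/

section OperatorSpaces

variable {K X U W : Type*} [Field K] [AddCommGroup X] [Module K X] [AddCommGroup U] [Module K U]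
  [AddCommGroup W] [Module K W]

/-- A space of operators has a *thin vector* `x ≠ 0` when its values at `x` lie on a line. Spaces of
operators are encoded as bilinear maps `e`, the operator attached to `m` being `e m`. -/
def HasThinVector (e : X →ₗ[K] U →ₗ[K] W) : Prop :=
  ∃ x ≠ 0, ∃ w, range (e.flip x) ≤ K ∙ w

/-- The part of primitivity with upper rank two that survives the passage to a quotient of the
target: ranks at most two, reducedness on both sides, and no hyperplane mapped into a line. -/
structure RankTwoCore (e : X →ₗ[K] U →ₗ[K] W) : Prop where
  finrank_range_le : ∀ m, finrank K (range (e m)) ≤ 2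
  eq_zero_of_forall_apply : ∀ x, (∀ m, e m x = 0) → x = 0
  eq_zero_of_forall_comp : ∀ f : Dual K W, (∀ m, f ∘ₗ e m = 0) → f = 0
  noncompression : ∀ (φ : Dual K U) (w : W), ¬ ∀ m, (ker φ).map (e m) ≤ K ∙ w

theorem RankTwoCore.range_ne_top {e : X →ₗ[K] U →ₗ[K] W} (he : RankTwoCore e)
    (hW : 3 ≤ finrank K W) (m : X) : range (e m) ≠ ⊤ := fun hm ↦ by
  have := he.finrank_range_le m
  rw [hm, finrank_top] at this
  lia

theorem RankTwoCore.exists_comp_ne_zero {e : X →ₗ[K] U →ₗ[K] W} (he : RankTwoCore e)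
    {f : Dual K W} (hf : f ≠ 0) : ∃ m, f ∘ₗ e m ≠ 0 := by
  by_contra! h
  exact hf (he.eq_zero_of_forall_comp f h)

theorem exists_dual_ne_zero_pair (hW : 3 ≤ finrank K W) (v w : W) :
    ∃ f : Dual K W, f ≠ 0 ∧ f v = 0 ∧ f w = 0 := by
  have hlt : span K (Set.range ![v, w]) < ⊤ := by
    refine lt_top_iff_ne_top.2 fun htop ↦ ?_
    have := finrank_range_le_card (R := K) ![v, w]
    rw [Set.finrank, htop, finrank_top, Fintype.card_fin] at this
    lia
  obtain ⟨f, hf, hle⟩ := exists_le_ker_of_lt_top _ hlt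
  exact ⟨f, hf, hle (subset_span ⟨0, rfl⟩), hle (subset_span ⟨1, rfl⟩)⟩

theorem RankTwoCore.exists_linearIndependent_mkQ {e : X →ₗ[K] U →ₗ[K] W}
    (he : RankTwoCore e) (hW : 3 ≤ finrank K W) (w : W) :
    ∃ N u v, LinearIndependent K ![(K ∙ w).mkQ (e N u), (K ∙ w).mkQ (e N v)] := by
  by_contra! h
  rcases exists_range_le_span_or_exists_ker_le_ker (e.compr₂ (K ∙ w).mkQ)
    fun m ↦ exists_range_le_span_singleton_of_not_linearIndependent (h m) with ⟨c, hc⟩ | ⟨φ, hφ⟩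
  · obtain ⟨c, rfl⟩ := mkQ_surjective _ c
    obtain ⟨f, hf, hfw, hfc⟩ := exists_dual_ne_zero_pair hW w c
    refine hf (he.eq_zero_of_forall_comp f fun m ↦ LinearMap.ext fun x ↦ ?_)
    obtain ⟨k, hk⟩ := mem_span_singleton.1 (hc m ⟨x, rfl⟩)
    obtain ⟨l, hl⟩ := mem_span_singleton.1 ((Submodule.Quotient.eq (K ∙ w)).1 hk)
    have hl' : f (k • c - e m x) = 0 := by rw [← hl, map_smul, hfw, smul_zero]
    simpa [hfc] using hl'
  · refine he.noncompression φ w fun m ↦ ?_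
    rintro _ ⟨x, hx, rfl⟩
    exact (Submodule.Quotient.mk_eq_zero _).1 (hφ m hx)

theorem exists_span_pair_le_span_singleton {x y : W} (h : ¬ LinearIndependent K ![x, y]) :
    ∃ w, span K {x, y} ≤ K ∙ w := by
  rcases eq_or_ne x 0 with rfl | hx
  · exact ⟨y, (span_insert_zero).le⟩
  · rw [linearIndependent_pair_iff_notMem_span hx, not_not] at h
    exact ⟨x, span_le.2 (Set.pair_subset (mem_span_singleton_self x) h)⟩

theorem hasThinVector_of_not_linearIndependent {e : X →ₗ[K] U →ₗ[K] W} {x y : U}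
    (hxy : LinearIndependent K ![x, y]) (h : ∀ m, ¬ LinearIndependent K ![e m x, e m y]) :
    HasThinVector e := by
  set S := span K {x, y}
  have hx : x ∈ S := mem_span_pair.2 ⟨1, 0, by simp⟩
  rcases exists_range_le_span_or_exists_ker_le_ker (e.domRestrict₂ S) (fun m ↦ by
    obtain ⟨w, hw⟩ := exists_span_pair_le_span_singleton (h m)
    refine ⟨w, ?_⟩
    rwa [← Set.image_pair, ← Submodule.map_span, ← range_domRestrict] at hw) with ⟨w, hw⟩ | ⟨φ, hφ⟩
  · refine ⟨x, hxy.ne_zero 0, w, ?_⟩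
    rintro _ ⟨m, rfl⟩
    exact hw m ⟨⟨x, hx⟩, rfl⟩
  · have hS : finrank K K < finrank K S := by
      have := finrank_span_eq_card hxy
      rw [Matrix.range_cons_cons_empty] at this
      rw [this, finrank_self, Fintype.card_fin]
      exact one_lt_two
    have := Module.finite_of_finrank_pos (pos_of_gt hS)
    obtain ⟨z, hz, hz₀⟩ := exists_mem_ne_zero_of_ne_bot (ker_ne_bot_of_finrank_lt (f := φ) hS)
    refine ⟨z, by simpa using hz₀, 0, ?_⟩
    rintro _ ⟨m, rfl⟩
    have hzm : e m z = 0 := hφ m hz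
    simp [hzm]

theorem RankTwoCore.dual [FiniteDimensional K U] [FiniteDimensional K W]
    {e : X →ₗ[K] U →ₗ[K] W} (he : RankTwoCore e) :
    RankTwoCore ((Module.Dual.transpose (R := K)) ∘ₗ e) where
  finrank_range_le m := (finrank_range_dualMap_eq_finrank_range (e m)).trans_le
    (he.finrank_range_le m)
  eq_zero_of_forall_apply f hf := he.eq_zero_of_forall_comp f hf
  eq_zero_of_forall_comp F hF := by
    obtain ⟨x, rfl⟩ := (evalEquiv K U).surjective F
    rw [he.eq_zero_of_forall_apply x fun m ↦ (forall_dual_apply_eq_zero_iff K _).1 fun f ↦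
      LinearMap.congr_fun (hF m) f, map_zero]
  noncompression φ f h := by
    obtain ⟨w, rfl⟩ := (evalEquiv K W).surjective φ
    refine he.noncompression f w fun m ↦ ?_
    rintro _ ⟨x, hx, rfl⟩
    by_contra hmx
    obtain ⟨g, hgx, hg⟩ := exists_le_ker_of_notMem hmx
    obtain ⟨k, hk⟩ := mem_span_singleton.1
      (h m ⟨g, by simpa using hg (mem_span_singleton_self w), rfl⟩)
    have hkx : k * f x = g (e m x) := LinearMap.congr_fun hk x
    exact hgx (by rw [← hkx, mem_ker.1 hx, mul_zero])

theorem RankTwoCore.exists_dual_apply_eq_smul [FiniteDimensional K W] {e : X →ₗ[K] U →ₗ[K] W}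
    (he : RankTwoCore e) {y : U} {w : W} (hy₀ : y ≠ 0) (hy : ∀ m, e m y ∈ K ∙ w) :
    ∃ a : Dual K X, a ≠ 0 ∧ (∀ m, e m y = a m • w) ∧
      ∀ m, a m = 1 → ∃ c, range (e.compr₂ (K ∙ w).mkQ m) ≤ K ∙ c := by
  obtain ⟨a, ha⟩ := exists_dual_smul_eq (F := e.flip y) (by rintro _ ⟨m, rfl⟩; exact hy m)
  obtain ⟨M, hM⟩ : ∃ m, a m • w ≠ 0 := by
    by_contra! h
    exact hy₀ (he.eq_zero_of_forall_apply y fun m ↦ (ha m).trans (h m))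
  refine ⟨a, fun h ↦ left_ne_zero_of_smul hM (by simp [h]), ha, fun m hm ↦ ?_⟩
  have hmy : e m y = w := by simpa [hm] using ha m
  have := exists_range_mkQ_comp_le_span_singleton (he.finrank_range_le m) (u := y)
    (hmy ▸ right_ne_zero_of_smul hM)
  rwa [hmy] at this

end OperatorSpaces

section ThinVectors

variable {X U W : Type*} [AddCommGroup X] [Module (ZMod 2) X] [AddCommGroup U] [Module (ZMod 2) U]
  [AddCommGroup W] [Module (ZMod 2) W]

theorem hasThinVector_of_functional [FiniteDimensional (ZMod 2) W] {e : X →ₗ[ZMod 2] U →ₗ[ZMod 2] W}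
    (he : ∀ m, finrank (ZMod 2) (range (e m)) ≤ 2) {f : Dual (ZMod 2) W} {x y : U}
    (hxy : LinearIndependent (ZMod 2) ![x, y]) (hx : f ∘ₗ e.flip x = 0) (hy : f ∘ₗ e.flip y = 0)
    {M : X} (hM : f ∘ₗ e M ≠ 0) : HasThinVector e := by
  obtain ⟨h, hh⟩ := DFunLike.ne_iff.1 hM
  have hdep (m : X) (hm : (f ∘ₗ e.flip h) m = 1) :
      ¬ LinearIndependent (ZMod 2) ![e.flip x m, e.flip y m] := fun hli ↦ by
    have hle : range (e m) ≤ ker f := by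
      rw [range_eq_span_pair (he m) hli, span_le]
      exact Set.pair_subset (LinearMap.congr_fun hx m) (LinearMap.congr_fun hy m)
    have hfh : f (e m h) = 0 := hle ⟨h, rfl⟩
    exact zero_ne_one (hfh.symm.trans hm)
  by_cases hN : ∃ N, LinearIndependent (ZMod 2) ![e N x, e N y]
  · obtain ⟨N, hN⟩ := hN
    obtain ⟨α, β, hαβ, hthin⟩ := exists_common_eigenvector hdep (DFunLike.ne_iff.2 ⟨M, hh⟩) hN
    refine ⟨α • x + β • y, fun h₀ ↦ ?_, α • e N x + β • e N y, ?_⟩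
    · obtain ⟨hα, hβ⟩ := LinearIndependent.pair_iff.1 hxy α β h₀
      exact hαβ.elim (· hα) (· hβ)
    · rintro _ ⟨m, rfl⟩
      simpa using hthin m
  · exact hasThinVector_of_not_linearIndependent hxy (not_exists.1 hN)

theorem apply_mem_span_of_pencil {e : X →ₗ[ZMod 2] U →ₗ[ZMod 2] W} {a : Dual (ZMod 2) X}
    (ha₀ : a ≠ 0) (ha : ∀ m, a m = 1 → ∃ c, range (e m) ≤ ZMod 2 ∙ c) {N : X} {u v z : U}
    (hN : LinearIndependent (ZMod 2) ![e N u, e N v]) (hz : e N z = 0) (m : X) :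
    e m z ∈ ZMod 2 ∙ e N v := by
  have hdep (u v : U) (m : X) (hm : a m = 1) :
      ¬ LinearIndependent (ZMod 2) ![e.flip u m, e.flip v m] :=
    have ⟨_, hc⟩ := ha m hm
    not_linearIndependent_pair_of_mem_span (hc ⟨u, rfl⟩) (hc ⟨v, rfl⟩)
  have huz : e N (u + z) = e N u := by rw [map_add, hz, add_zero]
  obtain ⟨P, Q, R, S, hu, hv, htr, -⟩ := exists_pencil_coordinates (hdep u v) ha₀ hN
  obtain ⟨P', Q', R', S', hu', hv', htr', -⟩ :=
    exists_pencil_coordinates (hdep (u + z) v) ha₀ (N := N)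
      (by rwa [flip_apply, huz])
  simp only [flip_apply] at hu hv hu' hv'
  have hS : S m = S' m := (eq_and_eq_of_smul_add_smul_eq hN ((hv m).symm.trans (huz ▸ hv' m))).2
  have hP : P m = P' m := by
    have : P m + S m = P' m + S' m := LinearMap.congr_fun (htr.trans htr'.symm) m
    rwa [hS, add_left_inj] at this
  have hmz := hu' m
  rw [map_add, huz, hu m, ← hP, add_assoc, add_right_inj, ← eq_sub_iff_add_eq', ← sub_smul] at hmz
  exact mem_span_singleton.2 ⟨_, hmz.symm⟩

theorem apply_eq_zero_of_pencil {e : X →ₗ[ZMod 2] U →ₗ[ZMod 2] W} {a : Dual (ZMod 2) X}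
    (ha₀ : a ≠ 0) (ha : ∀ m, a m = 1 → ∃ c, range (e m) ≤ ZMod 2 ∙ c) {N : X} {u v z : U}
    (hN : LinearIndependent (ZMod 2) ![e N u, e N v]) (hz : e N z = 0) (m : X) : e m z = 0 := by
  obtain ⟨k, hk⟩ := mem_span_singleton.1 (apply_mem_span_of_pencil ha₀ ha hN hz m)
  obtain ⟨l, hl⟩ := mem_span_singleton.1
    (apply_mem_span_of_pencil ha₀ ha (LinearIndependent.pair_symm_iff.1 hN) hz m)
  have hk₀ := (eq_and_eq_of_smul_add_smul_eq hN (a := 0) (b := k) (c := l) (d := 0)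
    (by simp [hk, hl])).2
  rw [← hk, hk₀, zero_smul]

theorem functional_eq_of_pencil {e : X →ₗ[ZMod 2] U →ₗ[ZMod 2] W} {a b : Dual (ZMod 2) X}
    (ha₀ : a ≠ 0) (ha : ∀ m, a m = 1 → ∃ c, range (e m) ≤ ZMod 2 ∙ c)
    (hb₀ : b ≠ 0) (hb : ∀ m, b m = 1 → ∃ c, range (e m) ≤ ZMod 2 ∙ c) {N : X} {u v : U}
    (hN : LinearIndependent (ZMod 2) ![e N u, e N v]) : a = b := by
  have hdep {m : X} (h : ∃ c, range (e m) ≤ ZMod 2 ∙ c) :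
      ¬ LinearIndependent (ZMod 2) ![e.flip u m, e.flip v m] :=
    have ⟨_, hc⟩ := h
    not_linearIndependent_pair_of_mem_span (hc ⟨u, rfl⟩) (hc ⟨v, rfl⟩)
  obtain ⟨P, Q, R, S, hu, hv, rfl, -⟩ :=
    exists_pencil_coordinates (fun m hm ↦ hdep (ha m hm)) ha₀ hN
  obtain ⟨P', Q', R', S', hu', hv', rfl, -⟩ :=
    exists_pencil_coordinates (fun m hm ↦ hdep (hb m hm)) hb₀ hN
  ext m
  exact congrArg₂ (· + ·)
    (eq_and_eq_of_smul_add_smul_eq hN ((hu m).symm.trans (hu' m))).1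
    (eq_and_eq_of_smul_add_smul_eq hN ((hv m).symm.trans (hv' m))).2

theorem RankTwoCore.not_hasThinVector [FiniteDimensional (ZMod 2) U] [FiniteDimensional (ZMod 2) W]
    {e : X →ₗ[ZMod 2] U →ₗ[ZMod 2] W} (he : RankTwoCore e) (hU : 4 ≤ finrank (ZMod 2) U)
    (hW : 3 ≤ finrank (ZMod 2) W) : ¬ HasThinVector e := by
  rintro ⟨x, hx₀, w, hx⟩
  set π := (ZMod 2 ∙ w).mkQ
  obtain ⟨N, u, v, hN⟩ := he.exists_linearIndependent_mkQ hW w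
  obtain ⟨a, ha₀, ha, ha₁⟩ := he.exists_dual_apply_eq_smul hx₀ fun m ↦ hx ⟨m, rfl⟩
  -- Modulo `w` the operator `N` has rank at most two, hence a kernel larger than the line of `x`.
  obtain ⟨y, hyN, hyx⟩ : ∃ y ∈ ker (π ∘ₗ e N), y ∉ ZMod 2 ∙ x := by
    refine SetLike.not_le_iff_exists.1 fun hle ↦ ?_
    have hker := (finrank_mono hle).trans (finrank_span_singleton hx₀).le
    have hrank := finrank_range_add_finrank_ker (π ∘ₗ e N)
    rw [range_comp] at hrank
    have := (finrank_map_le π (range (e N))).trans (he.finrank_range_le N)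
    lia
  have hy₀ : y ≠ 0 := (ne_of_mem_of_not_mem (zero_mem _) hyx).symm
  obtain ⟨b, hb₀, hb, hb₁⟩ := he.exists_dual_apply_eq_smul (w := w) hy₀ fun m ↦
    (Submodule.Quotient.mk_eq_zero _).1 (apply_eq_zero_of_pencil ha₀ ha₁ hN hyN m)
  have hab := functional_eq_of_pencil ha₀ ha₁ hb₀ hb₁ hN
  have hyx' : y - x = 0 := he.eq_zero_of_forall_apply _ fun m ↦ by
    rw [map_sub, ha, hb, hab, sub_self]
  rw [sub_eq_zero.1 hyx'] at hyx
  exact hyx (mem_span_singleton_self x)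

end ThinVectors

/-! ### Counting kernels and the dimension bound -/

section Counting

variable {K X U W : Type*} [Field K] [AddCommGroup X] [Module K X] [AddCommGroup U] [Module K U]
  [AddCommGroup W] [Module K W]

theorem sum_natCard_ker_eq_sum_natCard_ker_flip [Fintype X] [Fintype U] (e : X →ₗ[K] U →ₗ[K] W) :
    ∑ m, Nat.card (ker (e m)) = ∑ x, Nat.card (ker (e.flip x)) := by
  rw [← Nat.card_sigma, ← Nat.card_sigma]
  exact Nat.card_congr
    { toFun := fun p ↦ ⟨p.2, p.1, p.2.2⟩
      invFun := fun p ↦ ⟨p.2, p.1, p.2.2⟩ }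

theorem natCard_ker_mul_natCard [FiniteDimensional K X] [FiniteDimensional K W]
    (F : X →ₗ[K] W) :
    Nat.card (ker F) * Nat.card W = Nat.card X * Nat.card (ker F.dualMap) := by
  have hF := finrank_range_add_finrank_ker F
  have hF' := finrank_range_add_finrank_ker F.dualMap
  rw [finrank_range_dualMap_eq_finrank_range, Subspace.dual_finrank_eq] at hF'
  rw [natCard_eq_pow_finrank (K := K) (V := ker F), natCard_eq_pow_finrank (K := K) (V := W),
    natCard_eq_pow_finrank (K := K) (V := X), natCard_eq_pow_finrank (K := K) (V := ker F.dualMap),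
    ← pow_add, ← pow_add]
  congr 1
  lia

theorem natCard_mul_natCard_le_of_range_ne_top [Finite K] [FiniteDimensional K U]
    [FiniteDimensional K W] {F : U →ₗ[K] W} (hF : range F ≠ ⊤) :
    Nat.card K * Nat.card U ≤ Nat.card (ker F) * Nat.card W := by
  have hlt := finrank_lt hF
  have hrank := finrank_range_add_finrank_ker F
  rw [natCard_eq_pow_finrank (K := K) (V := U), natCard_eq_pow_finrank (K := K) (V := W),
    natCard_eq_pow_finrank (K := K) (V := ker F), ← pow_succ', ← pow_add]
  exact Nat.pow_le_pow_right Nat.card_pos (by lia)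

theorem natCard_le_of_forall_not_linearIndependent [Finite K] {S : Submodule K U}
    (hS : ∀ x ∈ S, ∀ y ∈ S, ¬ LinearIndependent K ![x, y]) : Nat.card S ≤ Nat.card K := by
  obtain ⟨w, hw⟩ := exists_range_le_span_singleton_of_not_linearIndependent (F := S.subtype)
    fun x y ↦ hS x x.2 y y.2
  rw [range_subtype] at hw
  have hsurj : Function.Surjective fun c : K ↦ (⟨c • w, smul_mem _ c (mem_span_singleton_self w)⟩ :
      K ∙ w) := fun ⟨y, hy⟩ ↦ by simpa [mem_span_singleton] using hy
  have := Finite.of_surjective _ hsurj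
  exact (Nat.card_le_card_of_injective _ (inclusion_injective hw)).trans
    (Nat.card_le_card_of_surjective _ hsurj)

/-- The functionals `m ↦ f (e m x)`, as a bilinear function of `f` and `x`. -/
def pairing (e : X →ₗ[K] U →ₗ[K] W) : Dual K W →ₗ[K] U →ₗ[K] Dual K X :=
  (Dual.transpose (R := K) ∘ₗ e.flip).flip

theorem pairing_apply (e : X →ₗ[K] U →ₗ[K] W) (f : Dual K W) (x : U) (m : X) :
    pairing e f x m = f (e m x) := rfl

-- Since `#ker (e.flip x) * #W = #X * #{f | pairing e f x = 0}`, counting the pairs `(m, x)` with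
-- `e m x = 0` amounts to counting the pairs `(f, x)` with `pairing e f x = 0`.
theorem sum_natCard_ker_mul_natCard [FiniteDimensional K X] [FiniteDimensional K W]
    [Fintype X] [Finite U] [Fintype (Dual K W)] (e : X →ₗ[K] U →ₗ[K] W) :
    (∑ m, Nat.card (ker (e m))) * Nat.card W =
      Nat.card X * ∑ f, Nat.card (ker (pairing e f)) := by
  have := Fintype.ofFinite U
  rw [sum_natCard_ker_eq_sum_natCard_ker_flip, sum_natCard_ker_eq_sum_natCard_ker_flip (pairing e),
    Finset.sum_mul, Finset.mul_sum]
  exact Finset.sum_congr rfl fun x _ ↦ natCard_ker_mul_natCard (e.flip x)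

theorem natCard_mul_natCard_lt_sum_natCard_ker_pairing [Finite K] [FiniteDimensional K X]
    [FiniteDimensional K U] [FiniteDimensional K W] [Fintype (Dual K W)] {e : X →ₗ[K] U →ₗ[K] W}
    (he : ∀ m, range (e m) ≠ ⊤) (hW : 2 ≤ finrank K W) :
    Nat.card K * Nat.card U < ∑ f, Nat.card (ker (pairing e f)) := by
  have := Module.finite_of_finite K (M := X)
  have := Module.finite_of_finite K (M := U)
  have := Fintype.ofFinite X
  have hK : 1 < Nat.card K := Finite.one_lt_card
  have hKW : Nat.card K < Nat.card W := by
    rw [natCard_eq_pow_finrank (K := K) (V := W)]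
    exact lt_self_pow₀ hK hW
  -- The operator `e 0 = 0` makes the inequality strict.
  have hlt : ∑ _m : X, Nat.card K * Nat.card U < ∑ m, Nat.card (ker (e m)) * Nat.card W := by
    refine Finset.sum_lt_sum (fun m _ ↦ natCard_mul_natCard_le_of_range_ne_top (he m))
      ⟨0, Finset.mem_univ 0, ?_⟩
    rw [map_zero, ker_zero, Nat.card_congr Submodule.topEquiv.toEquiv, mul_comm]
    exact Nat.mul_lt_mul_of_pos_left hKW Nat.card_pos
  rw [Finset.sum_const, Finset.card_univ, ← Nat.card_eq_fintype_card, smul_eq_mul,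
    ← Finset.sum_mul, sum_natCard_ker_mul_natCard] at hlt
  exact Nat.lt_of_mul_lt_mul_left hlt

theorem sum_natCard_ker_pairing [Fintype (Dual K W)] [DecidableEq (Dual K W)]
    (e : X →ₗ[K] U →ₗ[K] W) :
    ∑ f, Nat.card (ker (pairing e f)) =
      Nat.card U + ∑ f ∈ Finset.univ.erase 0, Nat.card (ker (pairing e f)) := by
  rw [← Finset.add_sum_erase _ _ (Finset.mem_univ 0), map_zero, ker_zero,
    Nat.card_congr Submodule.topEquiv.toEquiv]

theorem card_univ_erase_zero_dual [FiniteDimensional K W] [Fintype (Dual K W)]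
    [DecidableEq (Dual K W)] :
    (Finset.univ.erase (0 : Dual K W)).card = Nat.card K ^ finrank K W - 1 := by
  rw [Finset.card_erase_of_mem (Finset.mem_univ 0), Finset.card_univ, ← Nat.card_eq_fintype_card,
    natCard_eq_pow_finrank (K := K), Subspace.dual_finrank_eq]

theorem finrank_le_finrank_of_range_ne_top [Finite K] [FiniteDimensional K X]
    [FiniteDimensional K U] [FiniteDimensional K W] {e : X →ₗ[K] U →ₗ[K] W}
    (he : ∀ m, range (e m) ≠ ⊤) (hW : 2 ≤ finrank K W)
    (hf : ∀ f : Dual K W, f ≠ 0 → ∀ x y, pairing e f x = 0 → pairing e f y = 0 →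
      ¬ LinearIndependent K ![x, y]) :
    finrank K U ≤ finrank K W := by
  classical
  have := Module.finite_of_finite K (M := U)
  have := Module.finite_of_finite K (M := Dual K W)
  have := Fintype.ofFinite (Dual K W)
  have hlower := natCard_mul_natCard_lt_sum_natCard_ker_pairing he hW
  have hupper : ∑ f ∈ Finset.univ.erase 0, Nat.card (ker (pairing e f)) ≤
      (Nat.card K ^ finrank K W - 1) * Nat.card K := by
    rw [← card_univ_erase_zero_dual, ← smul_eq_mul]
    exact Finset.sum_le_card_nsmul _ _ _ fun f hf₀ ↦
      natCard_le_of_forall_not_linearIndependent fun x hx y hy ↦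
        hf f (Finset.ne_of_mem_erase hf₀) x y hx hy
  rw [sum_natCard_ker_pairing, natCard_eq_pow_finrank (K := K) (V := U)] at hlower
  rw [Nat.sub_mul, ← pow_succ, one_mul] at hupper
  have hK : 2 ≤ Nat.card K := Finite.one_lt_card
  have := Nat.mul_le_mul_right (Nat.card K ^ finrank K U) hK
  exact Nat.lt_succ_iff.1 ((Nat.pow_lt_pow_iff_right hK).1
    (show Nat.card K ^ finrank K U < Nat.card K ^ (finrank K W + 1) by lia))

end Counting

section SourceDimension

theorem exists_inf_span_pair_le_span_singleton {K W : Type*} [Field K] [AddCommGroup W] [Module K W]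
    {S : Submodule K W} {u w : W} (hu : u ∉ S) : ∃ v, S ⊓ span K {u, w} ≤ K ∙ v := by
  have hfin : FiniteDimensional K (span K {u, w}) := .span_of_finite K (Set.toFinite _)
  have hlt : S ⊓ span K {u, w} < span K {u, w} :=
    inf_le_right.lt_of_ne fun h ↦ hu (inf_eq_right.1 h (subset_span (by simp)))
  have hcard : finrank K (span K {u, w}) ≤ 2 := by
    rw [← Matrix.range_cons_cons_empty u w ![]]
    exact finrank_range_le_card ![u, w]
  have hfin' := Submodule.finiteDimensional_of_le hlt.le
  have hle : finrank K ↥(S ⊓ span K {u, w}) ≤ 1 := by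
    have := finrank_lt_finrank_of_lt hlt
    lia
  obtain ⟨v, hv⟩ := (finrank_le_one_iff_isPrincipal _).1 hle
  exact ⟨v, hv.le⟩

theorem RankTwoCore.exists_map_ker_le_span_pair {K X U W : Type*} [Field K] [AddCommGroup X]
    [Module K X] [AddCommGroup U] [Module K U] [AddCommGroup W] [Module K W]
    [FiniteDimensional K W] {e : X →ₗ[K] U →ₗ[K] W} (he : RankTwoCore e) (hthin : ¬ HasThinVector e)
    {u : W} (hu : ¬ RankTwoCore (e.compr₂ (K ∙ u).mkQ)) :
    ∃ (φ : Dual K U) (w : W), ∀ m, (ker φ).map (e m) ≤ span K {u, w} := by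
  by_contra! h
  refine hu ⟨fun m ↦ ?_, fun x hx ↦ ?_, fun f hf ↦ ?_, fun φ c hc ↦ ?_⟩
  · change finrank K (range ((K ∙ u).mkQ ∘ₗ e m)) ≤ 2
    rw [range_comp]
    exact (finrank_map_le _ _).trans (he.finrank_range_le m)
  · by_contra hx₀
    refine hthin ⟨x, hx₀, u, ?_⟩
    rintro _ ⟨m, rfl⟩
    exact (Submodule.Quotient.mk_eq_zero _).1 (hx m)
  · exact linearMap_qext _ (he.eq_zero_of_forall_comp (f ∘ₗ (K ∙ u).mkQ) hf)
  · obtain ⟨w, rfl⟩ := mkQ_surjective _ c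
    obtain ⟨m, hm⟩ := h φ w
    refine hm ?_
    have hpair : span K {u, w} = (K ∙ (K ∙ u).mkQ w).comap (K ∙ u).mkQ := by
      rw [← Set.image_singleton, ← Submodule.map_span, Submodule.comap_map_eq, ker_mkQ, sup_comm,
        span_insert]
    rw [hpair, ← Submodule.map_le_iff_le_comap, ← Submodule.map_comp]
    exact hc m

variable {X U W : Type*} [AddCommGroup X] [Module (ZMod 2) X] [AddCommGroup U] [Module (ZMod 2) U]
  [AddCommGroup W] [Module (ZMod 2) W] [FiniteDimensional (ZMod 2) X]
  [FiniteDimensional (ZMod 2) U] [FiniteDimensional (ZMod 2) W]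

theorem RankTwoCore.finrank_le_three_of_finrank_eq_three {e : X →ₗ[ZMod 2] U →ₗ[ZMod 2] W}
    (he : RankTwoCore e) (hW : finrank (ZMod 2) W = 3) : finrank (ZMod 2) U ≤ 3 := by
  by_contra! hU
  have hthin := he.not_hasThinVector hU hW.ge
  refine hU.not_ge ((finrank_le_finrank_of_range_ne_top (he.range_ne_top hW.ge) (by lia)
    fun f hf x y hx hy hxy ↦ ?_).trans hW.le)
  obtain ⟨M, hM⟩ := he.exists_comp_ne_zero hf
  exact hthin (hasThinVector_of_functional he.finrank_range_le hxy hx hy hM)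

-- If `finrank W ≥ 4` and the quotient by no line is a core, then for every `u` a hyperplane is
-- mapped into a plane containing `u`; two such hyperplanes meet in a thin vector.
theorem RankTwoCore.finrank_le_three {e : X →ₗ[ZMod 2] U →ₗ[ZMod 2] W} (he : RankTwoCore e)
    (hW : 3 ≤ finrank (ZMod 2) W) : finrank (ZMod 2) U ≤ 3 := by
  obtain ⟨d, hd⟩ := Nat.exists_eq_add_of_le' hW
  clear hW
  induction d generalizing W with
  | zero => exact he.finrank_le_three_of_finrank_eq_three (by lia)
  | succ d ih =>
    by_contra! hU
    have hthin := he.not_hasThinVector hU (by lia)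
    have hplane {u : W} (hu : u ≠ 0) : ∃ (φ : Dual (ZMod 2) U) (w : W),
        ∀ m, (ker φ).map (e m) ≤ span (ZMod 2) {u, w} := by
      refine he.exists_map_ker_le_span_pair hthin fun h ↦ hU.not_ge (ih h ?_)
      have := finrank_quotient_add_finrank (ZMod 2 ∙ u)
      rw [finrank_span_singleton hu] at this
      lia
    have : Nontrivial W := nontrivial_of_finrank_pos (R := ZMod 2) (by lia)
    obtain ⟨u, hu⟩ := exists_ne (0 : W)
    obtain ⟨φ, w, hφ⟩ := hplane hu
    obtain ⟨f, hf, hfu, hfw⟩ := exists_dual_ne_zero_pair (K := ZMod 2) (by lia) u w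
    have hker : span (ZMod 2) {u, w} ≤ ker f := span_le.2 (Set.pair_subset hfu hfw)
    obtain ⟨u', hu'⟩ := DFunLike.ne_iff.1 hf
    obtain ⟨φ', w', hφ'⟩ := hplane fun h : u' = 0 ↦ hu' (by simp [h])
    obtain ⟨v, hv⟩ := exists_inf_span_pair_le_span_singleton (w := w') fun h ↦ hu' (hker h)
    obtain ⟨x, hx, hx₀⟩ := exists_mem_ne_zero_of_ne_bot
      (ker_ne_bot_of_finrank_lt (f := φ.prod φ') (by rw [finrank_prod, finrank_self]; lia))
    obtain ⟨hφx, hφx'⟩ := Prod.mk_eq_zero.1 (mem_ker.1 hx)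
    refine hthin ⟨x, hx₀, v, ?_⟩
    rintro _ ⟨m, rfl⟩
    exact hv ⟨hφ m ⟨x, hφx, rfl⟩, hφ' m ⟨x, hφx', rfl⟩⟩

end SourceDimension

/-! ### Matrix spaces as operator spaces -/

section MatrixSpaces

variable {K : Type*} [Field K] {n p : ℕ} {V V₁ V₂ V₃ : Submodule K (Matrix (Fin n) (Fin p) K)}

/-- A space of matrices, as a space of operators on column vectors. -/
def opSpace (V : Submodule K (Matrix (Fin n) (Fin p) K)) :
    V →ₗ[K] (Fin p → K) →ₗ[K] (Fin n → K) :=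
  Matrix.mulVecBilin K K ∘ₗ V.subtype

@[simp]
theorem opSpace_apply (M : V) (x : Fin p → K) : opSpace V M x = M.1 *ᵥ x := rfl

theorem matEquiv_iff_forall_mem_iff : MatEquiv K V₁ V₂ ↔ ∃ (P : Matrix (Fin n) (Fin n) K)
    (Q : Matrix (Fin p) (Fin p) K), IsUnit P ∧ IsUnit Q ∧
      ∀ N, N ∈ V₂ ↔ ∃ M ∈ V₁, P * M * Q = N := by
  simp only [MatEquiv, Set.ext_iff, Set.mem_image, SetLike.mem_coe]

theorem MatEquiv.refl (V : Submodule K (Matrix (Fin n) (Fin p) K)) : MatEquiv K V V :=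
  ⟨1, 1, isUnit_one, isUnit_one, by simp⟩

theorem MatEquiv.symm (h : MatEquiv K V₁ V₂) : MatEquiv K V₂ V₁ := by
  obtain ⟨P, Q, hP, hQ, h⟩ := h
  refine ⟨P⁻¹, Q⁻¹, isUnit_nonsing_inv_iff.2 hP, isUnit_nonsing_inv_iff.2 hQ, ?_⟩
  rw [Matrix.isUnit_iff_isUnit_det] at hP hQ
  simp [h, Set.image_image, Matrix.mul_assoc, mul_nonsing_inv _ hQ,
    nonsing_inv_mul_cancel_left _ _ hP]

theorem MatEquiv.trans (h : MatEquiv K V₁ V₂) (h' : MatEquiv K V₂ V₃) : MatEquiv K V₁ V₃ := by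
  obtain ⟨P, Q, hP, hQ, h⟩ := h
  obtain ⟨P', Q', hP', hQ', h'⟩ := h'
  exact ⟨P' * P, Q * Q', hP'.mul hP, hQ.mul hQ', by
    simp [h', h, Set.image_image, Matrix.mul_assoc]⟩

theorem exists_matEquiv {P : Matrix (Fin n) (Fin n) K} {Q : Matrix (Fin p) (Fin p) K}
    (hP : IsUnit P) (hQ : IsUnit Q) (V : Submodule K (Matrix (Fin n) (Fin p) K)) :
    ∃ T, MatEquiv K V T ∧ ∀ N, N ∈ T ↔ ∃ M ∈ V, P * M * Q = N :=
  ⟨V.map (mulRightLinearMap (Fin n) K Q ∘ₗ mulLeftLinearMap (Fin p) K P), ⟨P, Q, hP, hQ, rfl⟩,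
    fun _ ↦ Iff.rfl⟩

theorem exists_isUnit_mulVec_eq {a b : Fin p → K} (ha : a ≠ 0) (hb : b ≠ 0) :
    ∃ R : Matrix (Fin p) (Fin p) K, IsUnit R ∧ R *ᵥ a = b := by
  obtain ⟨g, hg⟩ := Submodule.exists_linearEquiv_restrict_eq
    ((LinearEquiv.toSpanNonzeroSingleton K _ a ha).symm ≪≫ₗ
      LinearEquiv.toSpanNonzeroSingleton K _ b hb)
  refine ⟨LinearMap.toMatrix' g.toLinearMap, ?_, ?_⟩
  · rw [Matrix.isUnit_iff_isUnit_det, LinearMap.det_toMatrix']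
    exact LinearEquiv.isUnit_det' g
  · have hga := hg (LinearEquiv.toSpanNonzeroSingleton K _ a ha 1)
    rw [LinearEquiv.trans_apply, LinearEquiv.symm_apply_apply] at hga
    simpa [LinearMap.toMatrix'_mulVec] using hga.symm

theorem rank_le_one_of_col_mem_span_singleton {m ι : Type*} [Fintype ι] {M : Matrix m ι K}
    {w : m → K} (h : ∀ j, M.col j ∈ K ∙ w) : M.rank ≤ 1 := by
  rw [rank_eq_finrank_span_cols]
  exact (Submodule.finrank_mono (span_le.2 (Set.range_subset_iff.2 h))).trans
    ((finrank_span_le_card {w}).trans (by simp))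

-- In a basis of the source whose first `p - 1` vectors lie in `ker φ`, deleting the last column
-- leaves matrices with all columns in `K ∙ w`.
theorem exists_matEquiv_rank_dropCol_le_one {φ : Dual K (Fin p → K)} {w : Fin n → K}
    (h : ∀ M, (ker φ).map (opSpace V M) ≤ K ∙ w) :
    ∃ T, MatEquiv K V T ∧ ∀ M ∈ T, (dropCol M).rank ≤ 1 := by
  have hmem {Q : Matrix (Fin p) (Fin p) K} {j : Fin p} (hj : φ (Q.col j) = 0) (M) (hM : M ∈ V) :
      (M * Q).col j ∈ K ∙ w := by
    have := h ⟨M, hM⟩ ⟨Q.col j, hj, rfl⟩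
    rwa [opSpace_apply, ← mulVec_single_one, mulVec_mulVec, mulVec_single_one] at this
  by_cases hφ : φ = 0
  · refine ⟨V, .refl V, fun M hM ↦ rank_le_one_of_col_mem_span_singleton (w := w) fun j ↦ ?_⟩
    rw [← Matrix.mul_one M]
    exact hmem (by simp [hφ]) M hM
  obtain ⟨v, rfl⟩ := (dotProductEquiv K (Fin p)).surjective φ
  have hv : v ≠ 0 := by simpa using hφ
  have hp : 0 < p := (Function.ne_iff.1 hv).choose.pos
  obtain ⟨R, hR, hRv⟩ := exists_isUnit_mulVec_eq
    (a := Pi.single (⟨p - 1, by lia⟩ : Fin p) 1) (by simp) hv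
  have hRT : IsUnit Rᵀ := (isUnit_transpose R).2 hR
  obtain ⟨T, hVT, hT⟩ := exists_matEquiv isUnit_one (isUnit_nonsing_inv_iff.2 hRT) V
  refine ⟨T, hVT, fun N hN ↦ rank_le_one_of_col_mem_span_singleton (w := w) fun j ↦ ?_⟩
  obtain ⟨M, hM, rfl⟩ := (hT N).1 hN
  rw [Matrix.one_mul]
  refine hmem (j := Fin.castLE (Nat.sub_le p 1) j) ?_ M hM
  rw [dotProductEquiv_apply_apply, ← hRv, ← vecMul_transpose, ← dotProduct_mulVec,
    ← mulVec_single_one, mulVec_mulVec, mul_nonsing_inv _ ((Matrix.isUnit_iff_isUnit_det _).1 hRT)]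
  simp [Fin.ext_iff, j.2.ne']

theorem rank_le_urk {M : Matrix (Fin n) (Fin p) K} (hM : M ∈ V) : M.rank ≤ urk V := by
  refine le_csSup ⟨n, ?_⟩ ⟨M, hM, rfl⟩
  rintro _ ⟨N, -, rfl⟩
  exact N.rank_le_height

theorem Reduced.eq_zero_of_forall_comp (h : Reduced K V) {f : Dual K (Fin n → K)}
    (hf : ∀ M, f ∘ₗ opSpace V M = 0) : f = 0 := by
  refine LinearMap.ker_eq_top.1 (top_unique (h.2.ge.trans (span_le.2 ?_)))
  rintro _ ⟨M, hM, x, rfl⟩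
  exact LinearMap.congr_fun (hf ⟨M, hM⟩) x

theorem Primitive.rankTwoCore_opSpace (h : Primitive K V) (hV : urk V = 2) :
    RankTwoCore (opSpace V) where
  finrank_range_le M := (rank_le_urk M.2).trans_eq hV
  eq_zero_of_forall_apply x hx := h.1.1.1 x fun M hM ↦ hx ⟨M, hM⟩
  eq_zero_of_forall_comp _ hf := h.1.1.eq_zero_of_forall_comp hf
  noncompression _ _ hφ := h.1.2 (by simpa only [hV] using exists_matEquiv_rank_dropCol_le_one hφ)

theorem Primitive.three_le (h : Primitive K V) (hV : urk V = 2) : 3 ≤ n ∧ 3 ≤ p := by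
  constructor
  · by_contra! hn
    exact h.2 ⟨V, .refl V, fun M _ ↦ (dropRow M).rank_le_height.trans (by lia)⟩
  · by_contra! hp
    exact h.1.2 ⟨V, .refl V, fun M _ ↦ (dropCol M).rank_le_width.trans (by lia)⟩

theorem Primitive.dimensions_eq_three {V : Submodule (ZMod 2) (Matrix (Fin n) (Fin p) (ZMod 2))}
    (h : Primitive (ZMod 2) V) (hV : urk V = 2) : n = 3 ∧ p = 3 := by
  have he := h.rankTwoCore_opSpace hV
  obtain ⟨hn, hp⟩ := h.three_le hV
  have hp' := he.finrank_le_three (by rwa [finrank_fin_fun])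
  have hn' := he.dual.finrank_le_three (by rwa [Subspace.dual_finrank_eq, finrank_fin_fun])
  rw [Subspace.dual_finrank_eq] at hn'
  rw [finrank_fin_fun] at hp' hn'
  exact ⟨hn'.antisymm hn, hp'.antisymm hp⟩

end MatrixSpaces

/-! ### The case of a thin vector -/

section Triangular

variable {K U W X : Type*} [Field K] [AddCommGroup U] [Module K U] [AddCommGroup W] [Module K W]
  [AddCommGroup X] [Module K X]

theorem exists_matEquiv_of_basis {n p : ℕ} (V : Submodule K (Matrix (Fin n) (Fin p) K))
    (b : Basis (Fin p) K (Fin p → K)) (c : Basis (Fin n) K (Fin n → K)) :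
    ∃ T, MatEquiv K V T ∧ ∀ N, N ∈ T ↔ ∃ M, LinearMap.toMatrix b c (opSpace V M) = N := by
  let stdp := Pi.basisFun K (Fin p)
  let stdn := Pi.basisFun K (Fin n)
  have hbc (M : V) : c.toMatrix stdn * M.1 * stdp.toMatrix b =
      LinearMap.toMatrix b c (opSpace V M) := by
    rw [← basis_toMatrix_mul_linearMap_toMatrix_mul_basis_toMatrix b stdp c stdn]
    congr 2
    exact (LinearMap.toMatrix'_toLin' M.1).symm
  obtain ⟨T, hVT, hT⟩ := exists_matEquiv (.of_mul_eq_one _ (c.toMatrix_mul_toMatrix_flip stdn))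
    (.of_mul_eq_one _ (stdp.toMatrix_mul_toMatrix_flip b)) V
  exact ⟨T, hVT, fun N ↦ by simp only [hT, Subtype.exists, ← hbc, exists_prop]⟩

theorem linearIndependent_triple_of_linearIndependent_map {L : U →ₗ[K] W} {x u v : U}
    (hx : x ≠ 0) (hLx : L x = 0) (h : LinearIndependent K ![L u, L v]) :
    LinearIndependent K ![x, u, v] := by
  have h' : LinearIndependent K (L ∘ ![u, v]) := by rwa [← FinVec.map_eq]
  exact linearIndependent_finCons.2 ⟨.of_comp L h', fun hmem ↦
    hx ((Submodule.disjoint_def.1 (Submodule.range_ker_disjoint h')) x hmem hLx)⟩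

variable {e : X →ₗ[K] U →ₗ[K] W}

theorem exists_basis_of_linearIndependent_mkQ (hU : finrank K U = 3) (hW : finrank K W = 3)
    {x u v : U} {w : W} {N : X} (hx : x ≠ 0) (hw : w ≠ 0) (hNx : e N x ∈ K ∙ w)
    (h : LinearIndependent K ![(K ∙ w).mkQ (e N u), (K ∙ w).mkQ (e N v)]) :
    ∃ (b : Basis (Fin 3) K U) (c : Basis (Fin 3) K W),
      ⇑b = ![x, u, v] ∧ ⇑c = ![w, e N u, e N v] := by
  have hb := linearIndependent_triple_of_linearIndependent_map (L := (K ∙ w).mkQ ∘ₗ e N) hx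
    ((Submodule.Quotient.mk_eq_zero _).2 hNx) h
  have hc := linearIndependent_triple_of_linearIndependent_map hw
    ((Submodule.Quotient.mk_eq_zero _).2 (mem_span_singleton_self w)) h
  exact ⟨basisOfLinearIndependentOfCardEqFinrank hb (by simp [hU]),
    basisOfLinearIndependentOfCardEqFinrank hc (by simp [hW]), by simp, by simp⟩

end Triangular

section ThinClassification

variable {X U W : Type*} [AddCommGroup X] [Module (ZMod 2) X] [AddCommGroup U] [Module (ZMod 2) U]
  [AddCommGroup W] [Module (ZMod 2) W] {e : X →ₗ[ZMod 2] U →ₗ[ZMod 2] W}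

theorem exists_triangular_pair {a : Dual (ZMod 2) X} (ha₀ : a ≠ 0)
    (ha : ∀ m, a m = 1 → ∃ c, range (e m) ≤ ZMod 2 ∙ c) {N : X} {u v : U}
    (hN : LinearIndependent (ZMod 2) ![e N u, e N v]) :
    ∃ (u' v' : U) (P R S : Dual (ZMod 2) X), P + S = a ∧
      LinearIndependent (ZMod 2) ![e N u', e N v'] ∧
      ∀ m, e m u' = P m • e N u' ∧ e m v' = R m • e N u' + S m • e N v' := by
  have hdep (u v : U) (m : X) (hm : a m = 1) :
      ¬ LinearIndependent (ZMod 2) ![e.flip u m, e.flip v m] :=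
    have ⟨_, hc⟩ := ha m hm
    not_linearIndependent_pair_of_mem_span (hc ⟨u, rfl⟩) (hc ⟨v, rfl⟩)
  obtain ⟨α, β, hαβ, heig⟩ := exists_common_eigenvector (hdep u v) ha₀ hN
  obtain ⟨γ, δ, hdet⟩ : ∃ γ δ, α * δ ≠ β * γ :=
    hαβ.elim (fun hα ↦ ⟨0, 1, by simpa⟩) fun hβ ↦ ⟨1, 0, by simpa using hβ.symm⟩
  have hN' : LinearIndependent (ZMod 2) ![e N (α • u + β • v), e N (γ • u + δ • v)] := by
    simpa using ⟨hN, hdet⟩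
  obtain ⟨P, Q, R, S, hP, hR, htr, -⟩ := exists_pencil_coordinates (hdep _ _) ha₀ hN'
  refine ⟨_, _, P, R, S, htr, hN', fun m ↦ ⟨?_, hR m⟩⟩
  obtain ⟨k, hk⟩ := mem_span_singleton.1 (heig m)
  have hk' : k • e N (α • u + β • v) = e m (α • u + β • v) := by simpa using hk
  have hQ := (eq_and_eq_of_smul_add_smul_eq hN' (b := 0)
    (by simpa only [zero_smul, add_zero, flip_apply] using hk'.trans (hP m))).2
  simpa [← hQ] using hP m

theorem RankTwoCore.exists_toMatrix_mem_J3 (he : RankTwoCore e) (hU : finrank (ZMod 2) U = 3)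
    (hW : finrank (ZMod 2) W = 3) (hthin : HasThinVector e) :
    ∃ (b : Basis (Fin 3) (ZMod 2) U) (c : Basis (Fin 3) (ZMod 2) W),
      ∀ m, LinearMap.toMatrix b c (e m) ∈ J3 := by
  have := Module.finite_of_finrank_eq_succ hW
  obtain ⟨x, hx, w, hxw⟩ := hthin
  obtain ⟨a, ha₀, hax, ha⟩ := he.exists_dual_apply_eq_smul hx fun m ↦ hxw ⟨m, rfl⟩
  obtain ⟨N, u, v, hN⟩ := he.exists_linearIndependent_mkQ hW.ge w
  obtain ⟨u, v, P, R, S, rfl, hN, htri⟩ :=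
    exists_triangular_pair (e := e.compr₂ (ZMod 2 ∙ w).mkQ) ha₀ ha hN
  have hw : w ≠ 0 := by
    rintro rfl
    exact hx (he.eq_zero_of_forall_apply x fun m ↦ by simp [hax])
  obtain ⟨b, c, hb, hc⟩ := exists_basis_of_linearIndependent_mkQ hU hW hx hw (hxw ⟨N, rfl⟩) hN
  refine ⟨b, c, fun m ↦ ?_⟩
  have lift {y z : W} (h : (ZMod 2 ∙ w).mkQ y = (ZMod 2 ∙ w).mkQ z) : ∃ k : ZMod 2, y = k • w + z :=
    have ⟨k, hk⟩ := mem_span_singleton.1 ((Submodule.Quotient.eq _).1 h)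
    ⟨k, sub_eq_iff_eq_add.1 hk.symm⟩
  obtain ⟨hu, hv⟩ := htri m
  obtain ⟨k, hk⟩ := lift (z := P m • e N u) hu
  obtain ⟨l, hl⟩ := lift (z := R m • e N u + S m • e N v) hv
  have hcol₀ : e m (b 0) = (P m + S m) • c 0 := by simpa [hb, hc] using hax m
  have hcol₁ : e m (b 1) = k • c 0 + P m • c 1 := by simp [hb, hc, hk]
  have hcol₂ : e m (b 2) = l • c 0 + R m • c 1 + S m • c 2 := by
    simp [hb, hc, hl, add_assoc]
  refine ⟨?_, fun i j hij ↦ ?_⟩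
  · simp only [trace_fin_three, LinearMap.toMatrix_apply, hcol₀, hcol₁, hcol₂]
    simpa [add_assoc] using ZModModule.add_self (P m + S m)
  · fin_cases i <;> fin_cases j <;> simp at hij <;>
      simp [LinearMap.toMatrix_apply, hcol₀, hcol₁]

theorem exists_le_J3_of_hasThinVector {V : Submodule (ZMod 2) (Matrix (Fin 3) (Fin 3) (ZMod 2))}
    (hV : RankTwoCore (opSpace V)) (hthin : HasThinVector (opSpace V)) :
    ∃ T ≤ J3, MatEquiv (ZMod 2) V T := by
  obtain ⟨b, c, hbc⟩ := hV.exists_toMatrix_mem_J3 (by simp) (by simp) hthin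
  obtain ⟨T, hVT, hT⟩ := exists_matEquiv_of_basis V b c
  exact ⟨T, fun N hN ↦ ((hT N).1 hN).elim fun M hM ↦ hM ▸ hbc M, hVT⟩

end ThinClassification

/-! ### Matched pairs -/

section MatchedPairs

/-- The space of matrices obtained by evaluating the entries of a matrix of functionals, i.e. of a
matrix of linear forms in the parameter `x : X`. -/
def evalSpace {K X : Type*} [Field K] [AddCommGroup X] [Module K X] {n p : ℕ}
    (A : Matrix (Fin n) (Fin p) (Dual K X)) : Submodule K (Matrix (Fin n) (Fin p) K) :=
  range (LinearMap.pi fun i ↦ LinearMap.pi (A i))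

theorem mem_evalSpace {K X : Type*} [Field K] [AddCommGroup X] [Module K X] {n p : ℕ}
    {A : Matrix (Fin n) (Fin p) (Dual K X)} {N : Matrix (Fin n) (Fin p) K} :
    N ∈ evalSpace A ↔ ∃ x, A.map (· x) = N := Iff.rfl

theorem matEquiv_evalSpace_of_linearIndependent {K : Type*} [Field K] {n p : ℕ}
    (V : Submodule K (Matrix (Fin n) (Fin p) K)) {f : Fin n → Dual K (Fin n → K)}
    (hf : LinearIndependent K f) {x : Fin p → Fin p → K} (hx : LinearIndependent K x) :
    MatEquiv K V (evalSpace (of fun i j ↦ pairing (opSpace V) (f i) (x j))) := by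
  let E := dotProductEquiv K (Fin n)
  have hf' : LinearIndependent K (E.symm ∘ f) := hf.map' _ E.symm.ker
  have hP : IsUnit (of (E.symm ∘ f)) := linearIndependent_rows_iff_isUnit.1 hf'
  have hQ : IsUnit (of x)ᵀ := (isUnit_transpose _).2 (linearIndependent_rows_iff_isUnit.1 hx)
  have hentry (M : V) : of (E.symm ∘ f) * M.1 * (of x)ᵀ =
      (of fun i j ↦ pairing (opSpace V) (f i) (x j)).map (· M) := by
    rw [Matrix.mul_assoc]
    exact Matrix.ext fun i j ↦ LinearMap.congr_fun (E.apply_symm_apply (f i)) _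
  exact matEquiv_iff_forall_mem_iff.2 ⟨_, _, hP, hQ, fun N ↦ by
    simp only [mem_evalSpace, Subtype.exists, ← hentry, exists_prop]⟩

theorem injective_comp_of_linearIndependent {K U Y ι : Type*} [Field K] [AddCommGroup U]
    [Module K U] [AddCommGroup Y] [Module K Y] [Finite ι] {F : U →ₗ[K] Y}
    (hF : ∀ x y, x ≠ 0 → y ≠ 0 → F x = 0 → F y = 0 → x = y) {x : ι → U}
    (hx : LinearIndependent K x) {i : ι} (hi : F (x i) = 0) : Function.Injective (F ∘ x) := by
  classical
  intro j k hjk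
  by_contra hne
  have hjki : x j - x k = x i :=
    hF _ _ (sub_ne_zero.2 (hx.injective.ne hne)) (hx.ne_zero i)
      (by simpa [sub_eq_zero] using hjk) hi
  obtain ⟨g, hg⟩ := exists_linearMap_apply_eq_single hx
  have hsingle := congrArg g hjki
  rw [map_sub, hg, hg, hg] at hsingle
  obtain rfl : i = j := by
    by_contra hij
    simpa [Ne.symm hij, hne] using congrFun hsingle j
  simpa [Ne.symm hne] using congrFun hsingle k

variable {K X U W : Type*} [Field K] [AddCommGroup X] [Module K X] [AddCommGroup U] [Module K U]
  [AddCommGroup W] [Module K W]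

/-- A nonzero functional `f` and a nonzero vector `x` are matched by the operator space `e` when
`f (e m x) = 0` for all `m`, i.e. when they yield a zero entry in a matrix presentation of `e`. -/
def Matched (e : X →ₗ[K] U →ₗ[K] W) (f : Dual K W) (x : U) : Prop :=
  f ≠ 0 ∧ x ≠ 0 ∧ pairing e f x = 0

theorem det_pairing_eq_zero {ι : Type*} [Fintype ι] [DecidableEq ι] [FiniteDimensional K W]
    {e : X →ₗ[K] U →ₗ[K] W} {m : X} (hm : range (e m) ≠ ⊤) {f : ι → Dual K W}
    (hf : LinearIndependent K f) (hcard : Fintype.card ι = finrank K W) (x : ι → U) :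
    (of fun i j ↦ pairing e (f i) (x j) m).det = 0 := by
  obtain ⟨g, hg₀, hg⟩ := exists_le_ker_of_lt_top _ (lt_top_iff_ne_top.2 hm)
  have hspan : g ∈ span K (Set.range f) := by
    rw [hf.span_eq_top_of_card_eq_finrank' (hcard.trans Subspace.dual_finrank_eq.symm)]
    exact mem_top
  obtain ⟨c, rfl⟩ := (mem_span_range_iff_exists_fun K).1 hspan
  refine exists_vecMul_eq_zero_iff.1 ⟨c, ?_, funext fun j ↦ ?_⟩
  · rintro rfl
    simp at hg₀
  · simpa [vecMul, dotProduct, pairing_apply] using hg ⟨x j, rfl⟩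

theorem hasThinVector_of_linearIndependent_dual {e : X →ₗ[K] U →ₗ[K] W} (hW : finrank K W = 3)
    {f g : Dual K W} (hfg : LinearIndependent K ![f, g]) {x : U} (hx₀ : x ≠ 0)
    (hf : pairing e f x = 0) (hg : pairing e g x = 0) : HasThinVector e := by
  have := Module.finite_of_finrank_eq_succ hW
  have hrank := finrank_range_add_finrank_ker (LinearMap.pi ![f, g])
  rw [range_eq_top.2 (surjective_pi_of_linearIndependent hfg), finrank_top, hW,
    finrank_fin_fun] at hrank
  obtain ⟨w, hw⟩ := (finrank_le_one_iff_isPrincipal (ker (LinearMap.pi ![f, g]))).1 (by lia)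
  refine ⟨x, hx₀, w, ?_⟩
  rw [← hw]
  rintro _ ⟨m, rfl⟩
  refine mem_ker.2 (funext fun i ↦ ?_)
  fin_cases i
  exacts [LinearMap.congr_fun hf m, LinearMap.congr_fun hg m]

end MatchedPairs

section BinaryMatchedPairs

variable {X U W : Type*} [AddCommGroup X] [Module (ZMod 2) X] [AddCommGroup U] [Module (ZMod 2) U]
  [AddCommGroup W] [Module (ZMod 2) W] {e : X →ₗ[ZMod 2] U →ₗ[ZMod 2] W}

namespace RankTwoCore

theorem biUnique_matched (he : RankTwoCore e) (hW : finrank (ZMod 2) W = 3)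
    (hthin : ¬ HasThinVector e) : Relator.BiUnique (Matched e) := by
  have := Module.finite_of_finrank_eq_succ hW
  refine ⟨fun f x g hf hg ↦ ?_, fun f x y hx hy ↦ ?_⟩ <;> by_contra hne
  · exact hthin (hasThinVector_of_linearIndependent_dual hW
      (linearIndependent_pair_zmod_two_iff.2 ⟨hf.1, hg.1, hne⟩) hf.2.1 hf.2.2 hg.2.2)
  · obtain ⟨M, hM⟩ := he.exists_comp_ne_zero hx.1
    exact hthin (hasThinVector_of_functional he.finrank_range_le
      (linearIndependent_pair_zmod_two_iff.2 ⟨hx.2.1, hy.2.1, hne⟩) hx.2.2 hy.2.2 hM)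

theorem exists_matched_pair [FiniteDimensional (ZMod 2) X] (he : RankTwoCore e)
    (hU : finrank (ZMod 2) U = 3) (hW : finrank (ZMod 2) W = 3) (hthin : ¬ HasThinVector e) :
    ∃ f g x y, Matched e f x ∧ Matched e g y ∧ f ≠ g := by
  classical
  have := Module.finite_of_finrank_eq_succ hU
  have := Module.finite_of_finrank_eq_succ hW
  have := Module.finite_of_finite (ZMod 2) (M := Dual (ZMod 2) W)
  have := Fintype.ofFinite (Dual (ZMod 2) W)
  by_contra! h
  have hker (f : Dual (ZMod 2) W) (hf : f ≠ 0) :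
      Nat.card (ker (pairing e f)) ≤ 1 + if ∃ x, Matched e f x then 1 else 0 := by
    split_ifs with hmatch
    · refine (natCard_le_of_forall_not_linearIndependent fun x hx y hy hxy ↦ ?_).trans
        (Nat.card_zmod 2).le
      obtain ⟨hx₀, hy₀, hne⟩ := linearIndependent_pair_zmod_two_iff.1 hxy
      exact hne ((he.biUnique_matched hW hthin).2 ⟨hf, hx₀, hx⟩ ⟨hf, hy₀, hy⟩)
    · have hbot : ker (pairing e f) = ⊥ :=
        (Submodule.eq_bot_iff _).2 fun x hx ↦ by_contra fun hx₀ ↦ hmatch ⟨x, hf, hx₀, hx⟩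
      rw [hbot]
      simp
  have hone : (∑ f ∈ Finset.univ.erase 0, if ∃ x, Matched e f x then 1 else 0) ≤ 1 := by
    rw [← Finset.card_filter, Finset.card_le_one]
    intro f hf g hg
    obtain ⟨x, hx⟩ := (Finset.mem_filter.1 hf).2
    obtain ⟨y, hy⟩ := (Finset.mem_filter.1 hg).2
    exact h f g x y hx hy
  have hupper := Finset.sum_le_sum fun f (hf : f ∈ Finset.univ.erase 0) ↦
    hker f (Finset.ne_of_mem_erase hf)
  rw [Finset.sum_add_distrib, Finset.sum_const, card_univ_erase_zero_dual, hW] at hupper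
  have hlower := natCard_mul_natCard_lt_sum_natCard_ker_pairing (he.range_ne_top hW.ge) (by lia)
  rw [sum_natCard_ker_pairing, natCard_eq_pow_finrank (K := ZMod 2) (V := U), hU] at hlower
  simp only [Nat.card_zmod, smul_eq_mul] at hupper hlower
  lia

end RankTwoCore

end BinaryMatchedPairs

/-! ### Clearing the third diagonal entry -/

section CornerClearing

variable {X : Type*} [AddCommGroup X] [Module (ZMod 2) X]

theorem exists_add_add_eq_smul_of_mul_mul_eq_zero_on_ker {a b c d : Dual (ZMod 2) X} (ha : a ≠ 0)
    (hb : b ≠ 0) (hc : c ≠ 0) (had : a ≠ d) (hbd : b ≠ d) (hcd : c ≠ d)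
    (h : ∀ x, d x = 0 → a x * b x * c x = 0) : ∃ μ : ZMod 2, a + b + c = μ • d := by
  have restrict_ne_zero {g : Dual (ZMod 2) X} (hg : g ≠ 0) (hgd : g ≠ d) :
      g.domRestrict (ker d) ≠ 0 := fun h₀ ↦ by
    obtain ⟨x, hx, hdx⟩ := exists_dual_eq_one_eq_zero hg hgd
    exact one_ne_zero (hx.symm.trans (LinearMap.congr_fun h₀ ⟨x, hdx⟩))
  have hsum := add_add_eq_zero_of_dual_mul_mul_eq_zero (restrict_ne_zero ha had)
    (restrict_ne_zero hb hbd) (restrict_ne_zero hc hcd) fun x ↦ h x x.2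
  by_cases h₀ : a + b + c = 0
  · exact ⟨0, by rw [h₀, zero_smul]⟩
  · refine ⟨1, by_contra fun hne ↦ ?_⟩
    obtain ⟨x, hx, hdx⟩ := exists_dual_eq_one_eq_zero h₀ (by rwa [one_smul] at hne)
    exact one_ne_zero (hx.symm.trans (LinearMap.congr_fun hsum ⟨x, hdx⟩))

theorem exists_cross_eq_zero_of_ne {a b p q r s t : Dual (ZMod 2) X} (ha : a ≠ 0) (hb : b ≠ 0)
    (hab : a ≠ b) (hp : p ≠ 0) (hpa : p ≠ a) (hq : q ≠ 0) (hqb : q ≠ b) (hr : r ≠ 0) (hrb : r ≠ b)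
    (hs : s ≠ 0) (hsa : s ≠ a)
    (hdet : ∀ m, a m * q m * r m + p m * b m * s m + a m * b m * t m = 0) :
    ∃ α β γ δ : ZMod 2,
      t + α • r + β • s + γ • p + δ • q + (α * δ) • b + (β * γ) • a = 0 := by
  obtain ⟨μ, hμ⟩ := exists_add_add_eq_smul_of_mul_mul_eq_zero_on_ker ha hq hr hab hqb hrb
    fun m hm ↦ by simpa [hm] using hdet m
  obtain ⟨ν, hν⟩ := exists_add_add_eq_smul_of_mul_mul_eq_zero_on_ker hb hp hs hab.symm hpa hsa
    fun m hm ↦ by simpa [hm, mul_comm] using hdet m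
  have hprod (m : X) : a m * b m * (t + μ • r + ν • s) m = 0 := by
    have h₁ := LinearMap.congr_fun hμ m
    have h₂ := LinearMap.congr_fun hν m
    have cancel : ∀ x y : ZMod 2, x * y * (x + y) = 0 := by decide
    simp only [LinearMap.add_apply, LinearMap.smul_apply, smul_eq_mul] at h₁ h₂ ⊢
    linear_combination hdet m - a m * r m * h₁ - b m * s m * h₂ + cancel (a m) (r m) +
      cancel (b m) (s m)
  by_cases hg : t + μ • r + ν • s = 0
  · exact ⟨μ, ν, 0, 0, by simpa using hg⟩
  · have hsum := add_add_eq_zero_of_dual_mul_mul_eq_zero ha hb hg hprod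
    refine ⟨μ, ν + 1, 1, 0, LinearMap.ext fun m ↦ ?_⟩
    have h₁ := LinearMap.congr_fun hsum m
    have h₂ := LinearMap.congr_fun hν m
    simp only [LinearMap.add_apply, LinearMap.smul_apply, smul_eq_mul,
      LinearMap.zero_apply] at h₁ h₂ ⊢
    grind

theorem exists_eq_smul_add_of_eq_mul_add_mul {p q r s t : Dual (ZMod 2) X} (hp : p ≠ 0)
    (hq : q ≠ 0) (hr : r ≠ 0) (hs : s ≠ 0) (ht : ∀ m, t m = q m * r m + p m * s m) :
    ∃ β γ δ : ZMod 2, β * γ = 0 ∧ t = β • s + γ • p + δ • q := by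
  -- Polarization of the quadratic form `q r + p s`.
  have hpol (m k : X) : q m * r k + q k * r m + p m * s k + p k * s m = 0 := by
    have h := map_add t m k
    rw [ht, ht m, ht k] at h
    simp only [map_add] at h
    grind
  have mul_self : ∀ a : ZMod 2, a * a = a := by decide
  by_cases hqr : q = r
  · subst hqr
    obtain rfl : p = s := by
      by_contra hps
      obtain ⟨x, hpx, hsx⟩ := exists_dual_eq_one_eq_zero hp hps
      refine hs (LinearMap.ext fun k ↦ ?_)
      have := hpol x k
      rw [LinearMap.zero_apply]
      grind
    refine ⟨0, 1, 1, by simp, LinearMap.ext fun m ↦ ?_⟩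
    simp [ht, mul_self, add_comm]
  · obtain ⟨y, hqy, hry⟩ := exists_dual_eq_one_eq_zero hq hqr
    obtain ⟨z, hrz, hqz⟩ := exists_dual_eq_one_eq_zero hr (Ne.symm hqr)
    have hr' (k : X) : r k = p y * s k + s y * p k := by grind [hpol y k]
    have hq' (k : X) : q k = p z * s k + s z * p k := by grind [hpol z k]
    have hdet : p y * s z + s y * p z = 1 := by grind
    refine ⟨p y * p z, s y * s z, 0, ?_, LinearMap.ext fun m ↦ ?_⟩
    · have : ∀ a b c d : ZMod 2, a * d + c * b = 1 → a * b * (c * d) = 0 := by decide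
      exact this _ _ _ _ hdet
    · simp only [ht, hr', hq', LinearMap.add_apply, LinearMap.smul_apply, smul_eq_mul]
      linear_combination p y * p z * mul_self (s m) + s y * s z * mul_self (p m) +
        p m * s m * (hdet + CharTwo.add_self_eq_zero (1 : ZMod 2))

theorem exists_cross_eq_zero_of_eq {a p q r s t : Dual (ZMod 2) X} (ha : a ≠ 0)
    (hp : p ≠ 0) (hpa : p ≠ a) (hq : q ≠ 0) (hqa : q ≠ a) (hr : r ≠ 0) (hra : r ≠ a)
    (hs : s ≠ 0) (hsa : s ≠ a)
    (hdet : ∀ m, a m * q m * r m + p m * a m * s m + a m * a m * t m = 0) :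
    ∃ α β γ δ : ZMod 2,
      t + α • r + β • s + γ • p + δ • q + (α * δ) • a + (β * γ) • a = 0 := by
  obtain ⟨m, hm⟩ := DFunLike.ne_iff.1 ha
  replace hm := zmod_two_eq_one_of_ne_zero hm
  have add_smul_ne_zero {g : Dual (ZMod 2) X} (hg : g ≠ 0) (hga : g ≠ a) (c : ZMod 2) :
      g + c • a ≠ 0 := by
    rcases zmod_two_eq_zero_or_one c with rfl | rfl
    · simpa using hg
    · rwa [one_smul, Ne, zmod_two_add_eq_zero_iff]
  -- After this change of the corner entry all linear data vanish at `m`, where `a m = 1`.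
  set t' := t + q m • r + p m • s + s m • p + r m • q + (q m * r m + p m * s m) • a with ht'
  have hquad (k : X) : t' k =
      (q + q m • a) k * (r + r m • a) k + (p + p m • a) k * (s + s m • a) k := by
    have hone (k : X) (hk : a k = 1) : t k = q k * r k + p k * s k := by grind [hdet k]
    have htm := hone m hm
    simp only [ht', LinearMap.add_apply, LinearMap.smul_apply, smul_eq_mul]
    rcases zmod_two_eq_zero_or_one (a k) with hk | hk
    · have htk := hone (k + m) (by simp [hk, hm])
      simp only [map_add] at htk
      grind
    · have htk := hone k hk
      grind
  obtain ⟨β, γ, δ, hβγ, h⟩ := exists_eq_smul_add_of_eq_mul_add_mul (add_smul_ne_zero hp hpa (p m))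
    (add_smul_ne_zero hq hqa (q m)) (add_smul_ne_zero hr hra (r m))
    (add_smul_ne_zero hs hsa (s m)) hquad
  refine ⟨q m, p m + β, s m + γ, r m + δ, ?_⟩
  refine LinearMap.ext fun k ↦ ?_
  have hk := LinearMap.congr_fun h k
  simp only [ht', LinearMap.add_apply, LinearMap.smul_apply, smul_eq_mul,
    LinearMap.zero_apply] at hk ⊢
  grind

theorem exists_cross_eq_zero {A : Matrix (Fin 3) (Fin 3) (Dual (ZMod 2) X)} (h₁₁ : A 1 1 = 0)
    (h₂₂ : A 2 2 = 0) (hrow₁ : (A 1).Injective) (hrow₂ : (A 2).Injective)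
    (hcol₁ : (Aᵀ 1).Injective) (hcol₂ : (Aᵀ 2).Injective) (hdet : ∀ m, (A.map (· m)).det = 0) :
    ∃ α β γ δ : ZMod 2, A 0 0 + α • A 0 1 + β • A 0 2 + γ • A 1 0 + δ • A 2 0 +
      (α * δ) • A 2 1 + (β * γ) • A 1 2 = 0 := by
  have hp : A 1 0 ≠ 0 := h₁₁ ▸ hrow₁.ne (show 0 ≠ 1 by decide)
  have ha : A 1 2 ≠ 0 := h₁₁ ▸ hrow₁.ne (show 2 ≠ 1 by decide)
  have hpa : A 1 0 ≠ A 1 2 := hrow₁.ne (show 0 ≠ 2 by decide)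
  have hq : A 2 0 ≠ 0 := h₂₂ ▸ hrow₂.ne (show 0 ≠ 2 by decide)
  have hb : A 2 1 ≠ 0 := h₂₂ ▸ hrow₂.ne (show 1 ≠ 2 by decide)
  have hqb : A 2 0 ≠ A 2 1 := hrow₂.ne (show 0 ≠ 1 by decide)
  have hr : A 0 1 ≠ 0 := h₁₁ ▸ hcol₁.ne (show 0 ≠ 1 by decide)
  have hrb : A 0 1 ≠ A 2 1 := hcol₁.ne (show 0 ≠ 2 by decide)
  have hs : A 0 2 ≠ 0 := h₂₂ ▸ hcol₂.ne (show 0 ≠ 2 by decide)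
  have hsa : A 0 2 ≠ A 1 2 := hcol₂.ne (show 0 ≠ 1 by decide)
  have hdet' (m : X) : A 1 2 m * A 2 0 m * A 0 1 m + A 1 0 m * A 2 1 m * A 0 2 m +
      A 1 2 m * A 2 1 m * A 0 0 m = 0 := by
    have := hdet m
    simp only [det_fin_three, map_apply, h₁₁, h₂₂, LinearMap.zero_apply] at this
    grind
  by_cases hab : A 1 2 = A 2 1
  · rw [← hab] at hqb hrb hdet' ⊢
    exact exists_cross_eq_zero_of_eq ha hp hpa hq hqb hr hrb hs hsa hdet'
  · exact exists_cross_eq_zero_of_ne ha hb hab hp hpa hq hqb hr hrb hs hsa hdet'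

end CornerClearing

section ZeroDiagonal

variable {X U W : Type*} [AddCommGroup X] [Module (ZMod 2) X] [AddCommGroup U] [Module (ZMod 2) U]
  [AddCommGroup W] [Module (ZMod 2) W] {e : X →ₗ[ZMod 2] U →ₗ[ZMod 2] W}

theorem linearIndependent_cons_add {K V : Type*} [Field K] [AddCommGroup V] [Module K V] {n : ℕ}
    {v : Fin n → V} {x y : V} (hx : LinearIndependent K (Fin.cons x v : Fin (n + 1) → V))
    (hy : y ∈ span K (Set.range v)) :
    LinearIndependent K (Fin.cons (x + y) v : Fin (n + 1) → V) := by
  rw [linearIndependent_finCons] at hx ⊢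
  exact ⟨hx.1, fun hmem ↦ hx.2 ((Submodule.add_mem_iff_left _ hy).1 hmem)⟩

namespace RankTwoCore

theorem injective_pairing_left (he : RankTwoCore e) (hW : finrank (ZMod 2) W = 3)
    (hthin : ¬ HasThinVector e) {ι : Type*} [Finite ι] {x : ι → U}
    (hx : LinearIndependent (ZMod 2) x) {f : Dual (ZMod 2) W} {i : ι} (hf : Matched e f (x i)) :
    Function.Injective fun j ↦ pairing e f (x j) :=
  injective_comp_of_linearIndependent (fun _ _ hy hz hfy hfz ↦
    (he.biUnique_matched hW hthin).2 ⟨hf.1, hy, hfy⟩ ⟨hf.1, hz, hfz⟩) hx hf.2.2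

theorem injective_pairing_right (he : RankTwoCore e) (hW : finrank (ZMod 2) W = 3)
    (hthin : ¬ HasThinVector e) {ι : Type*} [Finite ι] {f : ι → Dual (ZMod 2) W}
    (hf : LinearIndependent (ZMod 2) f) {x : U} {i : ι} (hx : Matched e (f i) x) :
    Function.Injective fun j ↦ pairing e (f j) x :=
  injective_comp_of_linearIndependent (F := (pairing e).flip x) (fun _ _ hg hh hgx hhx ↦
    (he.biUnique_matched hW hthin).1 ⟨hg, hx.2.1, hgx⟩ ⟨hh, hx.2.1, hhx⟩) hf hx.2.2

theorem exists_linearIndependent_matched (he : RankTwoCore e)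
    [FiniteDimensional (ZMod 2) X] (hU : finrank (ZMod 2) U = 3) (hW : finrank (ZMod 2) W = 3)
    (hthin : ¬ HasThinVector e) :
    ∃ (f : Fin 3 → Dual (ZMod 2) W) (x : Fin 3 → U), LinearIndependent (ZMod 2) f ∧
      LinearIndependent (ZMod 2) x ∧ ∀ i, Matched e (f i) (x i) := by
  have := Module.finite_of_finrank_eq_succ hW
  obtain ⟨f₁, f₂, x₁, x₂, h₁, h₂, hf₁₂⟩ := he.exists_matched_pair hU hW hthin
  have hx₁₂ : x₁ ≠ x₂ := by
    rintro rfl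
    exact hf₁₂ ((he.biUnique_matched hW hthin).1 h₁ h₂)
  obtain ⟨f₀, hf⟩ := exists_linearIndependent_cons_of_lt_finrank
    (linearIndependent_pair_zmod_two_iff.2 ⟨h₁.1, h₂.1, hf₁₂⟩)
    (by rw [Subspace.dual_finrank_eq, hW]; decide)
  obtain ⟨x₀, hx⟩ := exists_linearIndependent_cons_of_lt_finrank
    (linearIndependent_pair_zmod_two_iff.2 ⟨h₁.2.1, h₂.2.1, hx₁₂⟩) (by rw [hU]; decide)
  obtain ⟨α, β, γ, δ, h₀⟩ := exists_cross_eq_zero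
    (A := of fun i j ↦ pairing e (![f₀, f₁, f₂] i) (![x₀, x₁, x₂] j)) h₁.2.2 h₂.2.2
    (he.injective_pairing_left hW hthin hx (i := 1) h₁)
    (he.injective_pairing_left hW hthin hx (i := 2) h₂)
    (he.injective_pairing_right hW hthin hf (i := 1) h₁)
    (he.injective_pairing_right hW hthin hf (i := 2) h₂)
    fun m ↦ det_pairing_eq_zero (he.range_ne_top hW.ge m) hf (by simp [hW]) _
  have hf' := linearIndependent_cons_add hf (y := γ • f₁ + δ • f₂)
    (by rw [range_cons_cons_empty]; exact mem_span_pair.2 ⟨γ, δ, rfl⟩)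
  have hx' := linearIndependent_cons_add hx (y := α • x₁ + β • x₂)
    (by rw [range_cons_cons_empty]; exact mem_span_pair.2 ⟨α, β, rfl⟩)
  refine ⟨_, _, hf', hx', fun i ↦ ⟨hf'.ne_zero i, hx'.ne_zero i, ?_⟩⟩
  fin_cases i
  · change pairing e (f₀ + (γ • f₁ + δ • f₂)) (x₀ + (α • x₁ + β • x₂)) = 0
    change pairing e f₀ x₀ + α • pairing e f₀ x₁ + β • pairing e f₀ x₂ + γ • pairing e f₁ x₀ +
      δ • pairing e f₂ x₀ + (α * δ) • pairing e f₂ x₁ + (β * γ) • pairing e f₁ x₂ = 0 at h₀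
    rw [← h₀]
    simp only [map_add, map_smul, LinearMap.add_apply, LinearMap.smul_apply, h₁.2.2, h₂.2.2]
    module
  · exact h₁.2.2
  · exact h₂.2.2

end RankTwoCore

end ZeroDiagonal

/-! ### Matrices of functionals with zero diagonal -/

section EvalSpace

variable {K X α β : Type*} [Field K] [AddCommGroup X] [Module K X] {n p : ℕ}

theorem matEquiv_of_parametrization {V T : Submodule K (Matrix (Fin n) (Fin p) K)}
    {m : α → Matrix (Fin n) (Fin p) K} {t : β → Matrix (Fin n) (Fin p) K}
    (hV : ∀ N, N ∈ V ↔ ∃ u, m u = N) (hT : ∀ N, N ∈ T ↔ ∃ v, t v = N)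
    {P : Matrix (Fin n) (Fin n) K} {Q : Matrix (Fin p) (Fin p) K} (hP : IsUnit P.det)
    (hQ : IsUnit Q.det) (hmt : ∀ u, ∃ v, t v = P * m u * Q)
    (htm : ∀ v, ∃ u, P * m u * Q = t v) : MatEquiv K V T := by
  refine matEquiv_iff_forall_mem_iff.2 ⟨P, Q, (Matrix.isUnit_iff_isUnit_det _).2 hP,
    (Matrix.isUnit_iff_isUnit_det _).2 hQ, fun N ↦ ?_⟩
  simp only [hV, hT, exists_exists_eq_and]
  constructor
  · rintro ⟨v, rfl⟩
    exact htm v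
  · rintro ⟨u, rfl⟩
    exact hmt u

theorem mem_evalSpace_iff_of_linearIndependent {ι : Type*} [Finite ι]
    {A : Matrix (Fin n) (Fin p) (Dual K X)} {φ : ι → Dual K X} (hφ : LinearIndependent K φ)
    {m : (ι → K) → Matrix (Fin n) (Fin p) K} (hm : ∀ x, A.map (· x) = m fun i ↦ φ i x)
    (N : Matrix (Fin n) (Fin p) K) : N ∈ evalSpace A ↔ ∃ u, m u = N := by
  simp only [mem_evalSpace, hm]
  exact ((surjective_pi_of_linearIndependent hφ).exists (p := fun u ↦ m u = N)).symm

end EvalSpace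

section ParametrizedTargets

theorem mem_Mata3_iff_exists (N : Matrix (Fin 3) (Fin 3) (ZMod 2)) :
    N ∈ Mata3 ↔ ∃ u : Fin 3 → ZMod 2, !![0, u 0, u 2; u 0, 0, u 1; u 2, u 1, 0] = N := by
  constructor
  · rintro ⟨hsymm, hdiag⟩
    have hsymm' (i j) : N j i = N i j := by
      simpa [ZModModule.neg_eq_self] using congrFun₂ hsymm i j
    refine ⟨![N 0 1, N 1 2, N 0 2], Matrix.ext fun i j ↦ ?_⟩
    fin_cases i <;> fin_cases j <;> simp [hdiag, hsymm' 0 1, hsymm' 1 2, hsymm' 0 2]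
  · rintro ⟨u, rfl⟩
    refine ⟨?_, fun i ↦ by fin_cases i <;> rfl⟩
    rw [ZModModule.neg_eq_self]
    exact Matrix.ext fun i j ↦ by fin_cases i <;> fin_cases j <;> rfl

theorem mem_U3_iff_exists (N : Matrix (Fin 3) (Fin 3) (ZMod 2)) :
    N ∈ U3 ↔ ∃ u : Fin 3 → ZMod 2,
      !![0, u 0, u 0 + u 2; u 0, 0, u 1; u 0 + u 1, u 2, 0] = N := by
  constructor
  · rintro ⟨a, b, c, rfl⟩
    exact ⟨![a, b, c], rfl⟩
  · rintro ⟨u, rfl⟩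
    exact ⟨u 0, u 1, u 2, rfl⟩

theorem mem_V3_iff_exists (N : Matrix (Fin 3) (Fin 3) (ZMod 2)) :
    N ∈ V3 ↔ ∃ u : Fin 4 → ZMod 2,
      !![0, u 1, u 3 + u 0; u 3, 0, u 2; u 1 + u 2, u 0, 0] = N := by
  constructor
  · rintro ⟨hdiag, h, h'⟩
    have h₂₀ : N 0 1 + N 1 2 = N 2 0 := zmod_two_add_eq_zero_iff.1 h
    have h₀₂ : N 1 0 + N 2 1 = N 0 2 := by rw [add_comm, zmod_two_add_eq_zero_iff.1 h']
    refine ⟨![N 2 1, N 0 1, N 1 2, N 1 0], Matrix.ext fun i j ↦ ?_⟩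
    fin_cases i <;> fin_cases j <;> simp [hdiag, h₂₀, h₀₂]
  · rintro ⟨u, rfl⟩
    refine ⟨fun i ↦ by fin_cases i <;> rfl, ?_, ?_⟩
    · exact ZModModule.add_self (u 1 + u 2)
    · exact (congrArg (· + _) (add_comm _ _)).trans (ZModModule.add_self (u 3 + u 0))

end ParametrizedTargets

section ZeroDiagonalClassification

variable {X : Type*} [AddCommGroup X] [Module (ZMod 2) X]

theorem dual_eq_of_iInf_ker_le_ker {a b c g : Dual (ZMod 2) X} {x₀ : X} (ha : a x₀ = 1)
    (hb : b x₀ = 1) (hc : c x₀ = 1) (hg : g x₀ = 1)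
    (h : ∀ y, a y = 0 → b y = 0 → c y = 0 → g y = 0) :
    g = a ∨ g = b ∨ g = c ∨ g = a + b + c := by
  have hspan : g ∈ span (ZMod 2) (Set.range ![a, b, c]) := mem_span_of_iInf_ker_le_ker fun y hy ↦ by
    have hy' := (mem_iInf _).1 hy
    exact h y (hy' 0) (hy' 1) (hy' 2)
  obtain ⟨k, rfl⟩ := (mem_span_range_iff_exists_fun _).1 hspan
  simp only [Fin.sum_univ_three, LinearMap.add_apply, LinearMap.smul_apply, cons_val, ha, hb, hc]
    at hg ⊢
  rcases zmod_two_eq_zero_or_one (k 0) with h₀ | h₀ <;>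
    rcases zmod_two_eq_zero_or_one (k 1) with h₁ | h₁ <;>
    rcases zmod_two_eq_zero_or_one (k 2) with h₂ | h₂ <;> rw [h₀, h₁, h₂] at hg ⊢ <;>
    first | exact absurd hg (by decide) | simp

theorem linearIndependent_cons_triple_zmod_two {W : Type*} [AddCommGroup W] [Module (ZMod 2) W]
    {x y z w : W} (h : LinearIndependent (ZMod 2) ![x, y, z]) (hw : w ≠ 0) (hwx : w ≠ x)
    (hwy : w ≠ y) (hwz : w ≠ z) (hwxy : w ≠ x + y) (hwxz : w ≠ x + z) (hwyz : w ≠ y + z)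
    (hwxyz : w ≠ x + y + z) : LinearIndependent (ZMod 2) ![w, x, y, z] := by
  refine linearIndependent_finCons.2 ⟨h, fun hmem ↦ ?_⟩
  obtain ⟨k, hk⟩ := (mem_span_range_iff_exists_fun _).1 hmem
  simp only [Fin.sum_univ_three, cons_val] at hk
  rcases zmod_two_eq_zero_or_one (k 0) with h₀ | h₀ <;>
    rcases zmod_two_eq_zero_or_one (k 1) with h₁ | h₁ <;>
    rcases zmod_two_eq_zero_or_one (k 2) with h₂ | h₂ <;>
    simp only [h₀, h₁, h₂, one_smul, zero_smul, add_zero, zero_add] at hk <;>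
    exact absurd hk.symm (by assumption)

variable {A : Matrix (Fin 3) (Fin 3) (Dual (ZMod 2) X)}

theorem dual_eq_of_mul_mul_eq_mul_mul (hrow : ∀ i, (A i).Injective) (hcol : ∀ j, (Aᵀ j).Injective)
    (hdet : ∀ x, A 0 1 x * A 1 2 x * A 2 0 x = A 0 2 x * A 1 0 x * A 2 1 x) {x₀ : X}
    (hx₀ : A 0 1 x₀ * A 1 2 x₀ * A 2 0 x₀ = 1) :
    (A 0 2 = A 2 0 ∨ A 0 2 = A 0 1 + A 1 2 + A 2 0) ∧
      (A 1 0 = A 0 1 ∨ A 1 0 = A 0 1 + A 1 2 + A 2 0) ∧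
      (A 2 1 = A 1 2 ∨ A 2 1 = A 0 1 + A 1 2 + A 2 0) := by
  have eq_one : ∀ p q r : ZMod 2, p * q * r = 1 → p = 1 ∧ q = 1 ∧ r = 1 := by decide
  obtain ⟨h₀₁, h₁₂, h₂₀⟩ := eq_one _ _ _ hx₀
  obtain ⟨h₀₂, h₁₀, h₂₁⟩ := eq_one _ _ _ ((hdet x₀).symm.trans hx₀)
  have hker (y : X) (h₁ : A 0 1 y = 0) (h₂ : A 1 2 y = 0) (h₃ : A 2 0 y = 0) :
      A 0 2 y = 0 ∧ A 1 0 y = 0 ∧ A 2 1 y = 0 := by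
    have h := hdet (x₀ + y)
    simp only [map_add, h₀₁, h₁₂, h₂₀, h₀₂, h₁₀, h₂₁, h₁, h₂, h₃] at h
    simpa using eq_one _ _ _ (h.symm.trans (by decide))
  have hodd {g : Dual (ZMod 2) X} := dual_eq_of_iInf_ker_le_ker (g := g) h₀₁ h₁₂ h₂₀
  refine ⟨?_, ?_, ?_⟩
  · have h₁ : A 0 2 ≠ A 0 1 := (hrow 0).ne (by decide)
    have h₂ : A 0 2 ≠ A 1 2 := (hcol 2).ne (show 0 ≠ 1 by decide)
    simpa [h₁, h₂] using hodd h₀₂ fun y h₁ h₂ h₃ ↦ (hker y h₁ h₂ h₃).1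
  · have h₁ : A 1 0 ≠ A 1 2 := (hrow 1).ne (by decide)
    have h₂ : A 1 0 ≠ A 2 0 := (hcol 0).ne (show 1 ≠ 2 by decide)
    simpa [h₁, h₂] using hodd h₁₀ fun y h₁ h₂ h₃ ↦ (hker y h₁ h₂ h₃).2.1
  · have h₁ : A 2 1 ≠ A 2 0 := (hrow 2).ne (by decide)
    have h₂ : A 2 1 ≠ A 0 1 := (hcol 1).ne (show 2 ≠ 0 by decide)
    simpa [h₁, h₂] using hodd h₂₁ fun y h₁ h₂ h₃ ↦ (hker y h₁ h₂ h₃).2.2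

theorem linearIndependent_of_mul_mul_eq_one (hrow : ∀ i, (A i).Injective)
    (hcol : ∀ j, (Aᵀ j).Injective)
    (hdet : ∀ x, A 0 1 x * A 1 2 x * A 2 0 x = A 0 2 x * A 1 0 x * A 2 1 x) {x₀ : X}
    (hx₀ : A 0 1 x₀ * A 1 2 x₀ * A 2 0 x₀ = 1) :
    LinearIndependent (ZMod 2) ![A 0 1, A 1 2, A 2 0] := by
  obtain ⟨hb, hc, -⟩ := dual_eq_of_mul_mul_eq_mul_mul hrow hcol hdet hx₀
  have eq_one : ∀ p q r : ZMod 2, p * q * r = 1 → p = 1 ∧ q = 1 ∧ r = 1 := by decide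
  obtain ⟨h₀₁, h₁₂, h₂₀⟩ := eq_one _ _ _ hx₀
  have ne_zero {g : Dual (ZMod 2) X} (hg : g x₀ = 1) : g ≠ 0 := by
    rintro rfl
    exact zero_ne_one hg
  refine linearIndependent_triple_zmod_two (ne_zero h₀₁) (ne_zero h₁₂) (ne_zero h₂₀) ?_ ?_ ?_
    (ne_zero (by simp only [LinearMap.add_apply, h₀₁, h₁₂, h₂₀]; decide))
  · intro h
    rw [h, ZModModule.add_self, zero_add] at hc
    exact hc.elim ((hrow 1).ne (by decide)) ((hcol 0).ne (show 1 ≠ 2 by decide))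
  · intro h
    rw [h, add_right_comm, ZModModule.add_self, zero_add, ← h] at hb
    exact hb.elim ((hrow 0).ne (by decide)) ((hcol 2).ne (show 0 ≠ 1 by decide))
  · intro h
    rw [← h, add_assoc, ZModModule.add_self, add_zero] at hb
    exact hb.elim ((hcol 2).ne (show 0 ≠ 1 by decide)) ((hrow 0).ne (by decide))

theorem linearIndependent_of_mul_mul_eq_zero (hrow : ∀ i, (A i).Injective)
    (hcol : ∀ j, (Aᵀ j).Injective) (hdiag : ∀ i, A i i = 0)
    (h₂₀ : A 0 1 + A 1 2 = A 2 0) (h₀₂ : A 1 0 + A 2 1 = A 0 2)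
    (hsymm : A 1 0 = A 0 1 → A 2 1 ≠ A 1 2) :
    A 1 0 = A 0 1 ∧ LinearIndependent (ZMod 2) ![A 0 1, A 1 2, A 2 1] ∨
      LinearIndependent (ZMod 2) ![A 0 1, A 1 2, A 1 0] ∧
        (A 2 1 = A 1 2 ∨ A 2 1 = A 0 1 + A 1 2 + A 1 0 ∨
          LinearIndependent (ZMod 2) ![A 2 1, A 0 1, A 1 2, A 1 0]) := by
  have ne_zero {i j : Fin 3} (hij : i ≠ j) : A i j ≠ 0 := hdiag i ▸ (hrow i).ne hij.symm
  have had : A 0 1 ≠ A 1 2 := by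
    rw [Ne, ← zmod_two_add_eq_zero_iff, h₂₀]
    exact ne_zero (by decide)
  by_cases hac : A 1 0 = A 0 1
  · refine .inl ⟨hac, linearIndependent_triple_zmod_two (ne_zero (by decide)) (ne_zero (by decide))
      (ne_zero (by decide)) had ((hcol 1).ne (show 0 ≠ 2 by decide)) (hsymm hac).symm ?_⟩
    rw [h₂₀, Ne, zmod_two_add_eq_zero_iff]
    exact (hrow 2).ne (by decide)
  have hLI : LinearIndependent (ZMod 2) ![A 0 1, A 1 2, A 1 0] := by
    refine linearIndependent_triple_zmod_two (ne_zero (by decide)) (ne_zero (by decide))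
      (ne_zero (by decide)) had (Ne.symm hac) ((hrow 1).ne (by decide)) ?_
    rw [h₂₀, Ne, zmod_two_add_eq_zero_iff]
    exact (hcol 0).ne (show 2 ≠ 1 by decide)
  have h₂₁ : A 2 1 = A 0 2 + A 1 0 := by
    rw [← h₀₂, add_right_comm, ZModModule.add_self, zero_add]
  refine .inr ⟨hLI, or_iff_not_imp_left.2 fun hfd ↦ or_iff_not_imp_left.2 fun hf ↦
    linearIndependent_cons_triple_zmod_two hLI (ne_zero (by decide))
      ((hcol 1).ne (show 2 ≠ 0 by decide)) hfd ?_ (h₂₀ ▸ (hrow 2).ne (by decide)) ?_ ?_ hf⟩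
  · simpa [h₂₁] using ne_zero (i := 0) (j := 2) (by decide)
  · simpa [h₂₁] using (hrow 0).ne (show 2 ≠ 1 by decide)
  · simpa [h₂₁] using (hcol 2).ne (show 0 ≠ 1 by decide)

theorem dual_eq_cases_of_mul_mul_eq_one (hrow : ∀ i, (A i).Injective)
    (hcol : ∀ j, (Aᵀ j).Injective)
    (hdet : ∀ x, A 0 1 x * A 1 2 x * A 2 0 x = A 0 2 x * A 1 0 x * A 2 1 x) {x₀ : X}
    (hx₀ : A 0 1 x₀ * A 1 2 x₀ * A 2 0 x₀ = 1) :
    A 0 2 = A 2 0 ∧ A 1 0 = A 0 1 ∧ A 2 1 = A 1 2 ∨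
      A 0 2 = A 0 1 + A 1 2 + A 2 0 ∧ A 1 0 = A 0 1 ∧ A 2 1 = A 1 2 ∨
      A 0 2 = A 2 0 ∧ A 1 0 = A 0 1 + A 1 2 + A 2 0 ∧ A 2 1 = A 1 2 ∨
      A 0 2 = A 2 0 ∧ A 1 0 = A 0 1 ∧ A 2 1 = A 0 1 + A 1 2 + A 2 0 := by
  have hLI := linearIndependent_of_mul_mul_eq_one hrow hcol hdet hx₀
  have hpoint (p q r : ZMod 2) (hpqr : p * q * r = 0) : ∃ x, A 0 1 x = p ∧ A 1 2 x = q ∧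
      A 2 0 x = r ∧ A 0 2 x * A 1 0 x * A 2 1 x = 0 := by
    obtain ⟨x, hx⟩ := surjective_pi_of_linearIndependent hLI ![p, q, r]
    obtain rfl : A 0 1 x = p := congrFun hx 0
    obtain rfl : A 1 2 x = q := congrFun hx 1
    obtain rfl : A 2 0 x = r := congrFun hx 2
    exact ⟨x, rfl, rfl, rfl, (hdet x).symm.trans hpqr⟩
  obtain ⟨x, hx₁, hx₂, hx₃, hx⟩ := hpoint 1 0 0 (by decide)
  obtain ⟨y, hy₁, hy₂, hy₃, hy⟩ := hpoint 0 1 0 (by decide)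
  obtain ⟨z, hz₁, hz₂, hz₃, hz⟩ := hpoint 0 0 1 (by decide)
  obtain ⟨hb | hb, hc | hc, hf | hf⟩ := dual_eq_of_mul_mul_eq_mul_mul hrow hcol hdet hx₀
  · exact .inl ⟨hb, hc, hf⟩
  · exact .inr (.inr (.inr ⟨hb, hc, hf⟩))
  · exact .inr (.inr (.inl ⟨hb, hc, hf⟩))
  · simp [hb, hc, hf, hz₁, hz₂, hz₃] at hz
  · exact .inr (.inl ⟨hb, hc, hf⟩)
  · simp [hb, hc, hf, hx₁, hx₂, hx₃] at hx
  · simp [hb, hc, hf, hy₁, hy₂, hy₃] at hy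
  · simp [hb, hc, hf, hx₁, hx₂, hx₃] at hx

theorem map_apply_eq_of_diag_eq_zero (hdiag : ∀ i, A i i = 0) (x : X) :
    A.map (· x) = !![0, A 0 1 x, A 0 2 x; A 1 0 x, 0, A 1 2 x; A 2 0 x, A 2 1 x, 0] := by
  ext i j
  fin_cases i <;> fin_cases j <;> simp [hdiag]

theorem matEquiv_Mata3_or_U3 (hrow : ∀ i, (A i).Injective) (hcol : ∀ j, (Aᵀ j).Injective)
    (hdiag : ∀ i, A i i = 0)
    (hdet : ∀ x, A 0 1 x * A 1 2 x * A 2 0 x = A 0 2 x * A 1 0 x * A 2 1 x) {x₀ : X}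
    (hx₀ : A 0 1 x₀ * A 1 2 x₀ * A 2 0 x₀ = 1) :
    MatEquiv (ZMod 2) (evalSpace A) Mata3 ∨ MatEquiv (ZMod 2) (evalSpace A) U3 := by
  have hparam {m : (Fin 3 → ZMod 2) → _} := mem_evalSpace_iff_of_linearIndependent (A := A) (m := m)
    (linearIndependent_of_mul_mul_eq_one hrow hcol hdet hx₀)
  have hA := map_apply_eq_of_diag_eq_zero hdiag
  obtain ⟨hb, hc, hf⟩ | ⟨hb, hc, hf⟩ | ⟨hb, hc, hf⟩ | ⟨hb, hc, hf⟩ :=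
    dual_eq_cases_of_mul_mul_eq_one hrow hcol hdet hx₀ <;> rw [hb, hc, hf] at hA
  · refine .inl (matEquiv_of_parametrization (hparam hA) mem_Mata3_iff_exists
      (m := fun u ↦ !![0, u 0, u 2; u 0, 0, u 1; u 2, u 1, 0]) (P := 1) (Q := 1)
      (by decide) (by decide) (by decide) (by decide))
  · refine .inr (matEquiv_of_parametrization (hparam hA) mem_U3_iff_exists
      (m := fun u ↦ !![0, u 0, u 0 + u 1 + u 2; u 0, 0, u 1; u 2, u 1, 0])
      (P := !![0, 0, 1; 0, 1, 1; 1, 0, 0]) (Q := !![0, 0, 1; 0, 1, 0; 1, 1, 0])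
      (by decide) (by decide) (by decide) (by decide))
  · refine .inr (matEquiv_of_parametrization (hparam hA) mem_U3_iff_exists
      (m := fun u ↦ !![0, u 0, u 2; u 0 + u 1 + u 2, 0, u 1; u 2, u 1, 0])
      (P := !![0, 1, 0; 0, 1, 1; 1, 0, 0]) (Q := !![0, 0, 1; 1, 1, 0; 0, 1, 0])
      (by decide) (by decide) (by decide) (by decide))
  · refine .inr (matEquiv_of_parametrization (hparam hA) mem_U3_iff_exists
      (m := fun u ↦ !![0, u 0, u 2; u 0, 0, u 1; u 2, u 0 + u 1 + u 2, 0])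
      (P := !![0, 0, 1; 1, 0, 1; 0, 1, 0]) (Q := !![0, 1, 0; 0, 0, 1; 1, 1, 0])
      (by decide) (by decide) (by decide) (by decide))

theorem matEquiv_U3_or_V3 (hrow : ∀ i, (A i).Injective) (hcol : ∀ j, (Aᵀ j).Injective)
    (hdiag : ∀ i, A i i = 0) (h₂₀ : A 0 1 + A 1 2 = A 2 0) (h₀₂ : A 1 0 + A 2 1 = A 0 2)
    (hsymm : A 1 0 = A 0 1 → A 2 1 ≠ A 1 2) :
    MatEquiv (ZMod 2) (evalSpace A) U3 ∨ MatEquiv (ZMod 2) (evalSpace A) V3 := by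
  have hA := map_apply_eq_of_diag_eq_zero hdiag
  rw [← h₂₀, ← h₀₂] at hA
  obtain ⟨hc, hLI⟩ | ⟨hLI, hf | hf | hLI⟩ :=
    linearIndependent_of_mul_mul_eq_zero hrow hcol hdiag h₂₀ h₀₂ hsymm
  · rw [hc] at hA
    refine .inl (matEquiv_of_parametrization (mem_evalSpace_iff_of_linearIndependent hLI hA)
      mem_U3_iff_exists (m := fun u ↦ !![0, u 0, u 0 + u 2; u 0, 0, u 1; u 0 + u 1, u 2, 0])
      (P := 1) (Q := 1) (by decide) (by decide) (by decide) (by decide))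
  · rw [hf] at hA
    refine .inl (matEquiv_of_parametrization (mem_evalSpace_iff_of_linearIndependent hLI hA)
      mem_U3_iff_exists (m := fun u ↦ !![0, u 0, u 2 + u 1; u 2, 0, u 1; u 0 + u 1, u 1, 0])
      (P := !![0, 0, 1; 0, 1, 0; 1, 0, 0]) (Q := !![0, 0, 1; 0, 1, 0; 1, 0, 0])
      (by decide) (by decide) (by decide) (by decide))
  · rw [hf] at hA
    refine .inl (matEquiv_of_parametrization (mem_evalSpace_iff_of_linearIndependent hLI hA)
      mem_U3_iff_exists
      (m := fun u ↦ !![0, u 0, u 2 + (u 0 + u 1 + u 2); u 2, 0, u 1; u 0 + u 1, u 0 + u 1 + u 2, 0])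
      (P := !![0, 0, 1; 1, 0, 0; 0, 1, 0]) (Q := !![0, 1, 0; 0, 0, 1; 1, 0, 0])
      (by decide) (by decide) (by decide) (by decide))
  · refine .inr (matEquiv_of_parametrization (mem_evalSpace_iff_of_linearIndependent hLI hA)
      mem_V3_iff_exists
      (m := fun u ↦ !![0, u 1, u 3 + u 0; u 3, 0, u 2; u 1 + u 2, u 0, 0]) (P := 1) (Q := 1)
      (by decide) (by decide) ?_ ?_) <;>
    exact fun u ↦ ⟨u, by rw [Matrix.one_mul, Matrix.mul_one]⟩

theorem matEquiv_of_diag_eq_zero (hrow : ∀ i, (A i).Injective) (hcol : ∀ j, (Aᵀ j).Injective)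
    (hdiag : ∀ i, A i i = 0) (hdet : ∀ x, (A.map (· x)).det = 0)
    (hsymm : A 1 0 = A 0 1 → A 1 0 + A 2 0 + A 2 1 ≠ 0) :
    MatEquiv (ZMod 2) (evalSpace A) Mata3 ∨ MatEquiv (ZMod 2) (evalSpace A) U3 ∨
      MatEquiv (ZMod 2) (evalSpace A) V3 := by
  have ne_zero {i j : Fin 3} (hij : i ≠ j) : A i j ≠ 0 := hdiag i ▸ (hrow i).ne hij.symm
  have hdet' (x : X) : A 0 1 x * A 1 2 x * A 2 0 x = A 0 2 x * A 1 0 x * A 2 1 x := by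
    have := hdet x
    rw [map_apply_eq_of_diag_eq_zero hdiag, det_fin_three] at this
    rw [← zmod_two_add_eq_zero_iff]
    simpa using this
  by_cases h : ∃ x₀, A 0 1 x₀ * A 1 2 x₀ * A 2 0 x₀ = 1
  · obtain ⟨x₀, hx₀⟩ := h
    exact (matEquiv_Mata3_or_U3 hrow hcol hdiag hdet' hx₀).imp_right .inl
  · have hprod (x : X) : A 0 1 x * A 1 2 x * A 2 0 x = 0 :=
      by_contra fun hx ↦ h ⟨x, zmod_two_eq_one_of_ne_zero hx⟩
    have h₂₀ : A 0 1 + A 1 2 = A 2 0 := zmod_two_add_eq_zero_iff.1 <|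
      add_add_eq_zero_of_dual_mul_mul_eq_zero (ne_zero (by decide)) (ne_zero (by decide))
        (ne_zero (by decide)) hprod
    have h₀₂ : A 1 0 + A 2 1 = A 0 2 := zmod_two_add_eq_zero_iff.1 <| by
      rw [add_comm, ← add_assoc]
      exact add_add_eq_zero_of_dual_mul_mul_eq_zero (ne_zero (by decide)) (ne_zero (by decide))
        (ne_zero (by decide)) fun x ↦ (hdet' x).symm.trans (hprod x)
    refine .inr (matEquiv_U3_or_V3 hrow hcol hdiag h₂₀ h₀₂ fun hc hf ↦ hsymm hc ?_)
    rw [hc, ← h₂₀, hf, ← add_assoc, ZModModule.add_self, zero_add, ZModModule.add_self]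

end ZeroDiagonalClassification

section NoThinVector

namespace RankTwoCore

-- Otherwise `f 0 + f 1` and `f 2 + f 1` are both matched with `x 0 + x 1`.
theorem pairing_add_add_ne_zero {X U W : Type*} [AddCommGroup X] [Module (ZMod 2) X]
    [AddCommGroup U] [Module (ZMod 2) U] [AddCommGroup W] [Module (ZMod 2) W]
    {e : X →ₗ[ZMod 2] U →ₗ[ZMod 2] W} (he : RankTwoCore e) (hW : finrank (ZMod 2) W = 3)
    (hthin : ¬ HasThinVector e) {f : Fin 3 → Dual (ZMod 2) W} (hf : LinearIndependent (ZMod 2) f)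
    {x : Fin 3 → U} (hx : LinearIndependent (ZMod 2) x) (hfx : ∀ i, Matched e (f i) (x i))
    (hsymm : pairing e (f 1) (x 0) = pairing e (f 0) (x 1)) :
    pairing e (f 1) (x 0) + pairing e (f 2) (x 0) + pairing e (f 2) (x 1) ≠ 0 := by
  intro hsum
  have hxne : x 0 + x 1 ≠ 0 := zmod_two_add_eq_zero_iff.not.2 (hx.injective.ne (by decide))
  have hfne (i : Fin 3) (hi : i ≠ 1) : f i + f 1 ≠ 0 :=
    zmod_two_add_eq_zero_iff.not.2 (hf.injective.ne hi)
  have h₀₁ : Matched e (f 0 + f 1) (x 0 + x 1) :=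
    ⟨hfne 0 (by decide), hxne, by
      simp [(hfx 0).2.2, (hfx 1).2.2, hsymm, ZModModule.add_self]⟩
  have h₂₁ : Matched e (f 2 + f 1) (x 0 + x 1) :=
    ⟨hfne 2 (by decide), hxne, by
      simpa only [map_add, LinearMap.add_apply, (hfx 1).2.2, add_zero,
        add_comm (pairing e (f 2) (x 0))] using hsum⟩
  have := (he.biUnique_matched hW hthin).1 h₀₁ h₂₁
  exact hf.injective.ne (show (0 : Fin 3) ≠ 2 by decide) (add_right_cancel this)

theorem matEquiv_of_not_hasThinVector
    {V : Submodule (ZMod 2) (Matrix (Fin 3) (Fin 3) (ZMod 2))} (hV : RankTwoCore (opSpace V))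
    (hthin : ¬ HasThinVector (opSpace V)) :
    MatEquiv (ZMod 2) V Mata3 ∨ MatEquiv (ZMod 2) V U3 ∨ MatEquiv (ZMod 2) V V3 := by
  have hdim : finrank (ZMod 2) (Fin 3 → ZMod 2) = 3 := finrank_fin_fun _
  obtain ⟨f, x, hf, hx, hfx⟩ := hV.exists_linearIndependent_matched hdim hdim hthin
  have h := matEquiv_evalSpace_of_linearIndependent V hf hx
  refine (matEquiv_of_diag_eq_zero ?_ ?_ ?_ ?_ ?_).imp h.trans (.imp h.trans h.trans)
  · exact fun i ↦ hV.injective_pairing_left hdim hthin hx (hfx i)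
  · exact fun j ↦ hV.injective_pairing_right hdim hthin hf (hfx j)
  · exact fun i ↦ (hfx i).2.2
  · exact fun m ↦ det_pairing_eq_zero (hV.range_ne_top hdim.ge m) hf (by simp) x
  · exact hV.pairing_add_add_ne_zero hdim hthin hf hx hfx

end RankTwoCore

end NoThinVector

/-! ### Mutual exclusivity and the classification -/

section Exclusivity

theorem HasThinVector.of_matEquiv {K : Type*} [Field K] {n p : ℕ}
    {V W : Submodule K (Matrix (Fin n) (Fin p) K)} (hV : HasThinVector (opSpace V))
    (h : MatEquiv K V W) : HasThinVector (opSpace W) := by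
  obtain ⟨P, Q, -, hQ, h⟩ := matEquiv_iff_forall_mem_iff.1 h
  obtain ⟨x, hx, w, hxw⟩ := hV
  have hQx : Q *ᵥ (Q⁻¹ *ᵥ x) = x := by
    rw [mulVec_mulVec, mul_nonsing_inv _ ((Matrix.isUnit_iff_isUnit_det _).1 hQ), one_mulVec]
  refine ⟨Q⁻¹ *ᵥ x, fun h₀ ↦ hx (by rw [← hQx, h₀, mulVec_zero]), P *ᵥ w, ?_⟩
  rintro _ ⟨⟨N, hN⟩, rfl⟩
  obtain ⟨M, hM, rfl⟩ := (h N).1 hN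
  obtain ⟨c, hc⟩ := mem_span_singleton.1 (hxw ⟨⟨M, hM⟩, rfl⟩)
  refine mem_span_singleton.2 ⟨c, ?_⟩
  rw [flip_apply, opSpace_apply, ← mulVec_mulVec, hQx, ← mulVec_mulVec, ← mulVec_smul, hc,
    flip_apply, opSpace_apply]

theorem HasThinVector.of_le {K : Type*} [Field K] {n p : ℕ}
    {V W : Submodule K (Matrix (Fin n) (Fin p) K)} (hW : HasThinVector (opSpace W)) (h : V ≤ W) :
    HasThinVector (opSpace V) := by
  obtain ⟨x, hx, w, hxw⟩ := hW
  refine ⟨x, hx, w, ?_⟩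
  rintro _ ⟨M, rfl⟩
  exact hxw ⟨⟨M.1, h M.2⟩, rfl⟩

theorem hasThinVector_J3 : HasThinVector (opSpace J3) := by
  refine ⟨Pi.single 0 1, by simp, Pi.single 0 1, ?_⟩
  rintro _ ⟨⟨M, -, hM⟩, rfl⟩
  refine mem_span_singleton.2 ⟨M 0 0, ?_⟩
  ext i
  fin_cases i <;> simp [hM]

theorem not_hasThinVector_of_exists_mulVec_ne
    {T : Submodule (ZMod 2) (Matrix (Fin 3) (Fin 3) (ZMod 2))}
    {ι : Type*} {t : ι → Matrix (Fin 3) (Fin 3) (ZMod 2)} (ht : ∀ u, t u ∈ T)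
    (h : ∀ x ≠ 0, ∃ u v, t u *ᵥ x ≠ 0 ∧ t v *ᵥ x ≠ 0 ∧ t u *ᵥ x ≠ t v *ᵥ x) :
    ¬ HasThinVector (opSpace T) := by
  rintro ⟨x, hx, w, hxw⟩
  have heq (u) (hu : t u *ᵥ x ≠ 0) : t u *ᵥ x = w := by
    obtain ⟨c, hc⟩ := mem_span_singleton.1 (hxw ⟨⟨t u, ht u⟩, rfl⟩)
    rw [flip_apply, opSpace_apply] at hc
    have hc₀ : c ≠ 0 := fun hc₀ ↦ hu (by rw [← hc, hc₀, zero_smul])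
    rw [← hc, zmod_two_eq_one_of_ne_zero hc₀, one_smul]
  obtain ⟨u, v, hu, hv, huv⟩ := h x hx
  exact huv ((heq u hu).trans (heq v hv).symm)

theorem not_hasThinVector_Mata3 : ¬ HasThinVector (opSpace Mata3) :=
  not_hasThinVector_of_exists_mulVec_ne (fun u ↦ (mem_Mata3_iff_exists _).2 ⟨u, rfl⟩) (by decide)

theorem not_hasThinVector_U3 : ¬ HasThinVector (opSpace U3) :=
  not_hasThinVector_of_exists_mulVec_ne (fun u ↦ (mem_U3_iff_exists _).2 ⟨u, rfl⟩) (by decide)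

theorem U3_le_V3 : U3 ≤ V3 := by
  rintro _ ⟨a, b, c, rfl⟩
  refine ⟨fun i ↦ by fin_cases i <;> rfl, ?_, ?_⟩
  · exact ZModModule.add_self (a + b)
  · exact (congrArg (c + a + ·) (add_comm a c)).trans (ZModModule.add_self (c + a))

theorem not_hasThinVector_V3 : ¬ HasThinVector (opSpace V3) :=
  fun h ↦ not_hasThinVector_U3 (h.of_le U3_le_V3)

theorem MatEquiv.natCard_eq {K : Type*} [Field K] {n p : ℕ}
    {V W : Submodule K (Matrix (Fin n) (Fin p) K)} (h : MatEquiv K V W) :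
    Nat.card V = Nat.card W := by
  obtain ⟨P, Q, hP, hQ, h⟩ := h
  rw [Matrix.isUnit_iff_isUnit_det] at hP hQ
  have hinj : Function.Injective fun M : Matrix (Fin n) (Fin p) K ↦ P * M * Q :=
    Function.LeftInverse.injective (g := fun N ↦ P⁻¹ * N * Q⁻¹) fun M ↦ by
      simp only [Matrix.mul_assoc, mul_nonsing_inv _ hQ, Matrix.mul_one,
        nonsing_inv_mul_cancel_left _ _ hP]
  exact (Nat.card_image_of_injective hinj (V : Set _)).symm.trans
    (congrArg (fun s : Set _ ↦ Nat.card s) h.symm)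

theorem natCard_eq_of_parametrization {K ι M : Type*} [Semiring K] [AddCommMonoid M] [Module K M]
    {T : Submodule K M} {t : ι → M} (ht : ∀ N, N ∈ T ↔ ∃ u, t u = N) (hinj : Function.Injective t) :
    Nat.card T = Nat.card ι := by
  rw [← Nat.card_range_of_injective hinj]
  exact congrArg (fun s : Set M ↦ Nat.card s) (Set.ext ht)

theorem natCard_Mata3 : Nat.card Mata3 = 8 := by
  rw [natCard_eq_of_parametrization mem_Mata3_iff_exists (by decide)]
  simp

theorem natCard_U3 : Nat.card U3 = 8 := by
  rw [natCard_eq_of_parametrization mem_U3_iff_exists (by decide)]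
  simp

theorem natCard_V3 : Nat.card V3 = 16 := by
  rw [natCard_eq_of_parametrization mem_V3_iff_exists (by decide)]
  simp

theorem mem_Mata3_iff_forall_dotProduct_eq_zero (N : Matrix (Fin 3) (Fin 3) (ZMod 2)) :
    N ∈ Mata3 ↔ ∀ y, y ⬝ᵥ N *ᵥ y = 0 := by
  constructor
  · intro hN
    obtain ⟨u, rfl⟩ := (mem_Mata3_iff_exists N).1 hN
    exact (by decide : ∀ u y : Fin 3 → ZMod 2,
      y ⬝ᵥ !![0, u 0, u 2; u 0, 0, u 1; u 2, u 1, 0] *ᵥ y = 0) u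
  · intro h
    have hdiag (i : Fin 3) : N i i = 0 := by simpa using h (Pi.single i 1)
    refine ⟨?_, hdiag⟩
    rw [ZModModule.neg_eq_self]
    ext i j
    have hij := h (Pi.single i 1 + Pi.single j 1)
    simp only [mulVec_add, add_dotProduct, dotProduct_add, mulVec_single_one,
      single_one_dotProduct, col_apply, hdiag, zero_add, add_zero] at hij
    rw [transpose_apply, ← zmod_two_add_eq_zero_iff, hij]

theorem eq_zero_of_forall_mul_mem_Mata3 {R : Matrix (Fin 3) (Fin 3) (ZMod 2)}
    (h : ∀ M ∈ U3, R * M ∈ Mata3) : R = 0 := by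
  have hdiag (u : Fin 3 → ZMod 2) (i) := (h _ ((mem_U3_iff_exists _).2 ⟨u, rfl⟩)).2 i
  have hsymm (u : Fin 3 → ZMod 2) (i j) :=
    congrFun₂ (h _ ((mem_U3_iff_exists _).2 ⟨u, rfl⟩)).1 i j
  have h₀₂ : R 0 2 = 0 := by simpa [mul_apply, Fin.sum_univ_three] using hdiag ![0, 1, 0] 0
  have h₂₁ : R 2 1 = 0 := by simpa [mul_apply, Fin.sum_univ_three] using hdiag ![0, 1, 0] 2
  have h₁₂ : R 1 2 = 0 := by simpa [mul_apply, Fin.sum_univ_three] using hdiag ![0, 0, 1] 1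
  have h₂₀ : R 2 0 = 0 := by simpa [mul_apply, Fin.sum_univ_three] using hdiag ![0, 0, 1] 2
  have h₀₁ : R 0 1 = 0 := by simpa [mul_apply, Fin.sum_univ_three, h₀₂] using hdiag ![1, 0, 0] 0
  have h₁₀ : R 1 0 = 0 := by simpa [mul_apply, Fin.sum_univ_three] using hdiag ![1, 0, 0] 1
  have h₁₁ : R 1 1 = 0 := by simpa [mul_apply, Fin.sum_univ_three] using hsymm ![0, 1, 0] 2 1
  have h₀₀ : R 0 0 = 0 := by simpa [mul_apply, Fin.sum_univ_three] using hsymm ![0, 0, 1] 2 0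
  have h₂₂ : R 2 2 = 0 := by
    simpa [mul_apply, Fin.sum_univ_three, h₀₁] using hsymm ![0, 1, 0] 0 2
  ext i j
  fin_cases i <;> fin_cases j <;> assumption

-- If `P * M * Q` is alternating, then so is its congruence `(Q⁻¹)ᵀ * P * M` by `Q⁻¹`.
theorem not_matEquiv_Mata3_U3 : ¬ MatEquiv (ZMod 2) Mata3 U3 := by
  intro h
  obtain ⟨P, Q, hP, hQ, h⟩ := matEquiv_iff_forall_mem_iff.1 h.symm
  have hR : IsUnit ((Q⁻¹)ᵀ * P) :=
    ((isUnit_transpose _).2 (isUnit_nonsing_inv_iff.2 hQ)).mul hP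
  refine hR.ne_zero (eq_zero_of_forall_mul_mem_Mata3 fun M hM ↦ ?_)
  rw [mem_Mata3_iff_forall_dotProduct_eq_zero]
  intro y
  have hy := (mem_Mata3_iff_forall_dotProduct_eq_zero _).1 ((h _).2 ⟨M, hM, rfl⟩) (Q⁻¹ *ᵥ y)
  rwa [mulVec_mulVec, mul_nonsing_inv_cancel_right _ _ ((Matrix.isUnit_iff_isUnit_det _).1 hQ),
    ← vecMul_transpose, ← dotProduct_mulVec, mulVec_mulVec, ← Matrix.mul_assoc] at hy

theorem RankTwoCore.exactlyOne4 {V : Submodule (ZMod 2) (Matrix (Fin 3) (Fin 3) (ZMod 2))}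
    (hV : RankTwoCore (opSpace V)) :
    ExactlyOne4 (∃ T ≤ J3, MatEquiv (ZMod 2) V T) (MatEquiv (ZMod 2) V Mata3)
      (MatEquiv (ZMod 2) V U3) (MatEquiv (ZMod 2) V V3) := by
  have hthin : (∃ T ≤ J3, MatEquiv (ZMod 2) V T) ↔ HasThinVector (opSpace V) :=
    ⟨fun ⟨_, hT, h⟩ ↦ (hasThinVector_J3.of_le hT).of_matEquiv h.symm,
      exists_le_J3_of_hasThinVector hV⟩
  have hA (h : MatEquiv (ZMod 2) V Mata3) : ¬ HasThinVector (opSpace V) :=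
    fun ht ↦ not_hasThinVector_Mata3 (ht.of_matEquiv h)
  have hU (h : MatEquiv (ZMod 2) V U3) : ¬ HasThinVector (opSpace V) :=
    fun ht ↦ not_hasThinVector_U3 (ht.of_matEquiv h)
  have hV₃ (h : MatEquiv (ZMod 2) V V3) : ¬ HasThinVector (opSpace V) :=
    fun ht ↦ not_hasThinVector_V3 (ht.of_matEquiv h)
  have hAU (h : MatEquiv (ZMod 2) V Mata3) : ¬ MatEquiv (ZMod 2) V U3 :=
    fun h' ↦ not_matEquiv_Mata3_U3 (h.symm.trans h')
  have hAV (h : MatEquiv (ZMod 2) V Mata3) : ¬ MatEquiv (ZMod 2) V V3 := fun h' ↦ by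
    have := (h.symm.trans h').natCard_eq
    simp [natCard_Mata3, natCard_V3] at this
  have hUV (h : MatEquiv (ZMod 2) V U3) : ¬ MatEquiv (ZMod 2) V V3 := fun h' ↦ by
    have := (h.symm.trans h').natCard_eq
    simp [natCard_U3, natCard_V3] at this
  rw [ExactlyOne4, hthin]
  by_cases ht : HasThinVector (opSpace V)
  · exact .inl ⟨ht, fun h ↦ hA h ht, fun h ↦ hU h ht, fun h ↦ hV₃ h ht⟩
  · rcases hV.matEquiv_of_not_hasThinVector ht with h | h | h
    · exact .inr (.inl ⟨ht, h, hAU h, hAV h⟩)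
    · exact .inr (.inr (.inl ⟨ht, fun h' ↦ hAU h' h, h, hUV h⟩))
    · exact .inr (.inr (.inr ⟨ht, fun h' ↦ hAV h' h, fun h' ↦ hUV h' h, h⟩))

end Exclusivity

theorem reindexSub_rfl (V : Submodule (ZMod 2) (Matrix (Fin 3) (Fin 3) (ZMod 2))) :
    reindexSub rfl rfl V = V :=
  Submodule.map_id V

theorem classification_of_primitive_spaces_with_upper_rank_two {n p : ℕ}
    (V : Submodule (ZMod 2) (Matrix (Fin n) (Fin p) (ZMod 2)))
    (hprim : Primitive (ZMod 2) V) (hurk : urk V = 2) :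
    ∃ (hn : n = 3) (hp : p = 3),
      ExactlyOne4
        (∃ W : Submodule (ZMod 2) (Matrix (Fin 3) (Fin 3) (ZMod 2)),
          W ≤ J3 ∧ MatEquiv (ZMod 2) (reindexSub hn hp V) W)
        (MatEquiv (ZMod 2) (reindexSub hn hp V) Mata3)
        (MatEquiv (ZMod 2) (reindexSub hn hp V) U3)
        (MatEquiv (ZMod 2) (reindexSub hn hp V) V3) := by
  obtain ⟨rfl, rfl⟩ := hprim.dimensions_eq_three hurk
  refine ⟨rfl, rfl, ?_⟩
  rw [reindexSub_rfl]
  exact (hprim.rankTwoCore_opSpace hurk).exactlyOne4
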